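/- Under assumptions (1), (2), (3) on the quadratic integrals of the geodesic flow, and assuming in addition that the integrals are pairwise in involution, i.e. {I_α, I_β} = 0 on U × ℝⁿ for all α, β ∈ {1,…,n}, the integrals come locally from the Stäckel construction near almost every point: for almost every x₀ ∈ U (Lebesgue measure) there exist an open neighborhood V ⊆ U of x₀, an open set W ⊆ ℝⁿ, a smooth diffeomorphism φ : V → W with smooth inverse, and a smooth map S : W → (n×n real matrices) such that S(y) is invertible for every y ∈ W, the i-th row of S depends only on the i-th coordinate (i.e. (S(y))_{ij} = (S(y'))_{ij} for all j whenever y, y' ∈ W satisfy y_i = y'_i), and for every α ∈ {1,…,n}, every y ∈ W and every q ∈ ℝⁿ one has I_α(φ⁻¹(y), Dφ(φ⁻¹(y))ᵀ q) = ∑_{i=1}^n (S(y)⁻¹)_{α i} q_i², where Dφ(x) denotes the Jacobian matrix of φ at x. In particular the metric admits orthogonal separation of variables in the coordinates given by φ. -/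

import Mathlib

open MeasureTheory Matrix

/-- The canonical Poisson bracket on the phase space `(Fin n → ℝ) × (Fin n → ℝ)`
with coordinates `(x, p)`. -/
noncomputable def poisson {n : ℕ} (f h : (Fin n → ℝ) × (Fin n → ℝ) → ℝ)
    (z : (Fin n → ℝ) × (Fin n → ℝ)) : ℝ :=
  ∑ i : Fin n,
    (fderiv ℝ f z (Pi.single i 1, 0) * fderiv ℝ h z (0, Pi.single i 1)
      - fderiv ℝ f z (0, Pi.single i 1) * fderiv ℝ h z (Pi.single i 1, 0))

/-- The Jacobian matrix of a map `φ : ℝⁿ → ℝⁿ` at a point `x`. -/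
noncomputable def jacobian {n : ℕ} (φ : (Fin n → ℝ) → (Fin n → ℝ)) (x : Fin n → ℝ) :
    Matrix (Fin n) (Fin n) ℝ :=
  fun i j => fderiv ℝ (fun x' => φ x' i) x (Pi.single j 1)

/-!
Killing 2-tensors of a metric solve an overdetermined system of finite type: the third derivatives
of `L` are bounded by its 2-jet. Hence a Killing tensor whose 2-jet vanishes at one point of the
connected set `U` vanishes identically.

Suppose that `L = ∑ c α • K α` pointwise on a set `Z` of positive measure, where `L` and the `K α`
are Killing tensors, the `K α` are pointwise independent, and `c` extends smoothly off `Z`. At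
almost every point of `Z` all derivatives of `L - ∑ c α • K α` vanish, and then the Killing equation
and simultaneous diagonalisability give `Dc = 0`. Again almost everywhere on `Z` all derivatives of
`Dc` vanish, so `L - ∑ c α x • K α`, with the coefficients frozen at such a point `x`, is a Killing
tensor with vanishing 2-jet at `x`, and the relation is global with constant coefficients. Therefore
integrals that are functionally independent at a single point of phase space are given by matrices
which are linearly independent at almost every point of `U`.

Near such a point a suitable combination of the commuting matrices `G⁻¹ K α` has simple spectrum, so
its eigenvectors form a smooth coframe `B` with `B K α Bᵀ = diag (S⁻¹ α)`. After rescaling the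
coframe, each row of `S` has a constant nonzero entry. Involution of the combinations
`∑ α, a α • K α`, taken with `a` the rows of `S` at a point, then shows that `B` is closed and that
row `i` of `S` varies only in the `i`-th direction of the dual frame. By the Poincaré lemma `B` is
the Jacobian matrix of a map, and this map is the required chart.
-/

namespace Stackel

open Filter Topology
open scoped ContDiff Matrix.Norms.Operator

section MatrixDerivative

variable {ι E : Type*} [Finite ι] [NormedAddCommGroup E] [NormedSpace ℝ E] {x : E}
  {A : E → Matrix ι ι ℝ}

theorem fderiv_matrix_apply (hA : DifferentiableAt ℝ A x) (i j : ι) (u : E) :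
    fderiv ℝ (fun y => A y i j) x u = fderiv ℝ A x u i j := by
  cases nonempty_fintype ι
  have h := (Matrix.entryLinearMap ℝ ℝ i j).toContinuousLinearMap.hasFDerivAt.comp x hA.hasFDerivAt
  exact congrArg (· u) h.fderiv

theorem fderiv_matrix_transpose (hA : DifferentiableAt ℝ A x) (u : E) :
    fderiv ℝ (fun y => (A y)ᵀ) x u = (fderiv ℝ A x u)ᵀ := by
  cases nonempty_fintype ι
  have h := (Matrix.transposeLinearEquiv ι ι ℝ ℝ).toLinearMap.toContinuousLinearMap.hasFDerivAt.comp
    x hA.hasFDerivAt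
  exact congrArg (· u) h.fderiv

theorem fderiv_isSymm (hA : DifferentiableAt ℝ A x) (hs : ∀ᶠ y in 𝓝 x, (A y).IsSymm) (u : E) :
    (fderiv ℝ A x u).IsSymm := by
  have h : (fun y => (A y)ᵀ) =ᶠ[𝓝 x] A := hs
  rw [Matrix.IsSymm, ← fderiv_matrix_transpose hA, h.fderiv_eq]

end MatrixDerivative

section MatrixCalculus

variable {ι E F : Type*} [Fintype ι]
  [NormedAddCommGroup E] [NormedSpace ℝ E] [NormedAddCommGroup F] [NormedSpace ℝ F]
  {s : Set E} {x : E} {A B : E → Matrix ι ι ℝ} {v : E → ι → ℝ} {k : WithTop ℕ∞}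

/-- Matrix–vector multiplication as a continuous bilinear map, for use with the calculus library. -/
noncomputable def mulVecCLM (ι : Type*) [Fintype ι] :
    Matrix ι ι ℝ →L[ℝ] (ι → ℝ) →L[ℝ] (ι → ℝ) :=
  (mulVecBilin ℝ ℝ).toContinuousBilinearMap

/-- The dot product as a continuous bilinear map, for use with the calculus library. -/
noncomputable def dotProductCLM (ι : Type*) [Fintype ι] : (ι → ℝ) →L[ℝ] (ι → ℝ) →L[ℝ] ℝ :=
  (dotProductBilin ℝ ℝ).toContinuousBilinearMap

theorem differentiableAt_of_contDiffOn {f : E → F} (hf : ContDiffOn ℝ ∞ f s) (hs : IsOpen s)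
    (hx : x ∈ s) : DifferentiableAt ℝ f x :=
  (hf.contDiffAt (hs.mem_nhds hx)).differentiableAt (by simp)

theorem contDiffOn_fderiv_apply {f : E → F} {u : E → E} (hs : IsOpen s) (hf : ContDiffOn ℝ ∞ f s)
    (hu : ContDiffOn ℝ ∞ u s) : ContDiffOn ℝ ∞ (fun x => fderiv ℝ f x (u x)) s :=
  (hf.fderiv_of_isOpen hs le_rfl).clm_apply hu

theorem contDiffOn_matrix_mulVec (hA : ContDiffOn ℝ k A s) (hv : ContDiffOn ℝ k v s) :
    ContDiffOn ℝ k (fun x => A x *ᵥ v x) s :=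
  ((mulVecCLM ι).contDiff.comp_contDiffOn hA).clm_apply hv

theorem contDiffOn_dotProduct {w : E → ι → ℝ} (hv : ContDiffOn ℝ k v s) (hw : ContDiffOn ℝ k w s) :
    ContDiffOn ℝ k (fun x => v x ⬝ᵥ w x) s :=
  ((dotProductCLM ι).contDiff.comp_contDiffOn hv).clm_apply hw

theorem hasFDerivAt_matrix_mulVec {A' : E →L[ℝ] Matrix ι ι ℝ} {v' : E →L[ℝ] ι → ℝ}
    (hA : HasFDerivAt A A' x) (hv : HasFDerivAt v v' x) :
    HasFDerivAt (fun y => A y *ᵥ v y)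
      ((mulVecCLM ι).precompR E (A x) v' + (mulVecCLM ι).precompL E A' (v x)) x :=
  (mulVecCLM ι).hasFDerivAt_of_bilinear hA hv

theorem fderiv_matrix_mul (hA : DifferentiableAt ℝ A x) (hB : DifferentiableAt ℝ B x) (u : E) :
    fderiv ℝ (fun y => A y * B y) x u = fderiv ℝ A x u * B x + A x * fderiv ℝ B x u := by
  classical
  exact (congrArg (· u) (fderiv_fun_mul' hA hB)).trans (add_comm _ _)

theorem contDiffOn_matrix :
    ContDiffOn ℝ k A s ↔ ∀ i j, ContDiffOn ℝ k (fun x => A x i j) s := by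
  classical
  refine ⟨fun h i j => ?_, fun h => ?_⟩
  · exact (Matrix.entryLinearMap ℝ ℝ i j).toContinuousLinearMap.contDiff.comp_contDiffOn h
  · have hsum : A = fun x => ∑ i, ∑ j, A x i j • Matrix.single i j (1 : ℝ) := by
      funext x
      simpa only [Matrix.smul_single, smul_eq_mul, mul_one] using matrix_eq_sum_single (A x)
    rw [hsum]
    exact .sum fun i _ => .sum fun j _ => (h i j).smul contDiffOn_const

theorem contDiffOn_matrix_transpose (hA : ContDiffOn ℝ k A s) :
    ContDiffOn ℝ k (fun x => (A x)ᵀ) s :=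
  contDiffOn_matrix.2 fun i j => contDiffOn_matrix.1 hA j i

theorem contDiffOn_matrix_inv [DecidableEq ι] (hA : ContDiffOn ℝ k A s)
    (hu : ∀ x ∈ s, IsUnit (A x)) :
    ContDiffOn ℝ k (fun x => (A x)⁻¹) s := by
  intro x hx
  obtain ⟨a, ha⟩ := hu x hx
  have h := contDiffAt_ringInverse ℝ (n := k) a
  rw [ha] at h
  simpa only [nonsing_inv_eq_ringInverse, Function.comp_def] using
    h.comp_contDiffWithinAt x (hA x hx)

end MatrixCalculus

section PoissonBracket

variable {ι E : Type*} [Fintype ι] [NormedAddCommGroup E] [NormedSpace ℝ E]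

theorem dotProduct_mulVec_comm_of_isSymm {A : Matrix ι ι ℝ} (hA : A.IsSymm) (v w : ι → ℝ) :
    v ⬝ᵥ A *ᵥ w = w ⬝ᵥ A *ᵥ v := by
  rw [dotProduct_mulVec, ← mulVec_transpose, hA.eq, dotProduct_comm]

theorem fderiv_quadraticForm {A : E → Matrix ι ι ℝ} {x : E} (hA : DifferentiableAt ℝ A x)
    (hs : (A x).IsSymm) (p : ι → ℝ) (u : E) (w : ι → ℝ) :
    fderiv ℝ (fun z : E × (ι → ℝ) => z.2 ⬝ᵥ A z.1 *ᵥ z.2) (x, p) (u, w) =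
      p ⬝ᵥ fderiv ℝ A x u *ᵥ p + 2 * (w ⬝ᵥ A x *ᵥ p) := by
  have hA' := hA.hasFDerivAt.comp (x, p) (f := Prod.fst) hasFDerivAt_fst
  have hp : HasFDerivAt Prod.snd (ContinuousLinearMap.snd ℝ E (ι → ℝ)) (x, p) := hasFDerivAt_snd
  have h := (dotProductCLM ι).hasFDerivAt_of_bilinear hp (hasFDerivAt_matrix_mulVec hA' hp)
  refine (congrArg (· (u, w)) h.fderiv).trans ?_
  change p ⬝ᵥ (A x *ᵥ w + fderiv ℝ A x u *ᵥ p) + w ⬝ᵥ A x *ᵥ p = _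
  rw [dotProduct_add, dotProduct_mulVec_comm_of_isSymm hs p w]
  ring

/-- The quadratic forms `p ⬝ᵥ A x *ᵥ p` and `p ⬝ᵥ B x *ᵥ p` are in involution over `U`. The two
sides are the two halves of their Poisson bracket, see `poisson_quadraticForm`. -/
def InvolutiveOn (U : Set (ι → ℝ)) (A B : (ι → ℝ) → Matrix ι ι ℝ) : Prop :=
  ∀ x ∈ U, ∀ p : ι → ℝ,
    p ⬝ᵥ fderiv ℝ A x (B x *ᵥ p) *ᵥ p = p ⬝ᵥ fderiv ℝ B x (A x *ᵥ p) *ᵥ p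

theorem sum_smul_map_single [DecidableEq ι] {F : Type*} [AddCommGroup F] [Module ℝ F]
    [TopologicalSpace F] (f : (ι → ℝ) →L[ℝ] F) (v : ι → ℝ) :
    ∑ i, v i • f (Pi.single i 1) = f v := by
  conv_rhs => rw [pi_eq_sum_univ' v]
  simp [Pi.single]

theorem poisson_quadraticForm {n : ℕ} {A B : (Fin n → ℝ) → Matrix (Fin n) (Fin n) ℝ}
    {x : Fin n → ℝ} (hA : DifferentiableAt ℝ A x) (hB : DifferentiableAt ℝ B x)
    (hAs : (A x).IsSymm) (hBs : (B x).IsSymm) (p : Fin n → ℝ) :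
    poisson (fun z => z.2 ⬝ᵥ A z.1 *ᵥ z.2) (fun z => z.2 ⬝ᵥ B z.1 *ᵥ z.2) (x, p) =
      2 * (p ⬝ᵥ fderiv ℝ A x (B x *ᵥ p) *ᵥ p - p ⬝ᵥ fderiv ℝ B x (A x *ᵥ p) *ᵥ p) := by
  have hsum (A' : (Fin n → ℝ) →L[ℝ] Matrix (Fin n) (Fin n) ℝ) (v : Fin n → ℝ) :
      ∑ i, v i * (p ⬝ᵥ A' (Pi.single i 1) *ᵥ p) = p ⬝ᵥ A' v *ᵥ p := by
    have h := congrArg (fun M : Matrix (Fin n) (Fin n) ℝ => p ⬝ᵥ M *ᵥ p) (sum_smul_map_single A' v)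
    simpa only [sum_mulVec, dotProduct_sum, smul_mulVec, dotProduct_smul, smul_eq_mul] using h
  simp only [poisson, fderiv_quadraticForm hA hAs, fderiv_quadraticForm hB hBs, map_zero,
    zero_mulVec, dotProduct_zero, zero_dotProduct, single_one_dotProduct, mul_zero, add_zero,
    zero_add]
  rw [← hsum, ← hsum, ← Finset.sum_sub_distrib, Finset.mul_sum]
  exact Finset.sum_congr rfl fun i _ => by ring

end PoissonBracket

section UniqueContinuation

variable {E F : Type*} [NormedAddCommGroup E] [NormedSpace ℝ E] [NormedAddCommGroup F]
  [NormedSpace ℝ F] {U : Set E} {u : E → F} {x y : E}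

theorem eq_zero_of_norm_fderiv_le_on_segment {C : ℝ}
    (hd : ∀ z ∈ segment ℝ x y, DifferentiableAt ℝ u z)
    (hC : ∀ z ∈ segment ℝ x y, ‖fderiv ℝ u z‖ ≤ C * ‖u z‖) (hx : u x = 0) : u y = 0 := by
  have hmem {t : ℝ} (ht : t ∈ Set.Icc 0 1) : AffineMap.lineMap x y t ∈ segment ℝ x y := by
    rw [segment_eq_image_lineMap]
    exact Set.mem_image_of_mem _ ht
  have hder {t : ℝ} (ht : t ∈ Set.Icc 0 1) : HasDerivAt (u ∘ AffineMap.lineMap x y)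
      (fderiv ℝ u (AffineMap.lineMap x y t) (y - x)) t :=
    (hd _ (hmem ht)).hasFDerivAt.comp_hasDerivAt t AffineMap.hasDerivAt_lineMap
  have h := eq_zero_of_abs_deriv_le_mul_abs_self_of_eq_zero_right (K := C * ‖y - x‖)
    (fun t ht => (hder ht).continuousAt.continuousWithinAt)
    (fun t ht => (hder (Set.Ico_subset_Icc_self ht)).hasDerivWithinAt) (by simpa using hx)
    (fun t ht => ?_) 1 (Set.right_mem_Icc.2 zero_le_one)
  · simpa using h
  · calc _ ≤ ‖fderiv ℝ u (AffineMap.lineMap x y t)‖ * ‖y - x‖ := ContinuousLinearMap.le_opNorm _ _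
      _ ≤ (C * ‖u (AffineMap.lineMap x y t)‖) * ‖y - x‖ := by
        gcongr
        exact hC _ (hmem (Set.Ico_subset_Icc_self ht))
      _ = _ := mul_right_comm _ _ _

theorem eventually_eq_zero_of_fderiv_isBigO (hd : ∀ᶠ z in 𝓝 x, DifferentiableAt ℝ u z)
    (hO : fderiv ℝ u =O[𝓝 x] u) (hx : u x = 0) : ∀ᶠ y in 𝓝 x, u y = 0 := by
  obtain ⟨C, hC⟩ := hO.bound
  obtain ⟨r, hr0, hr⟩ := Metric.eventually_nhds_iff_ball.1 (hd.and hC)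
  filter_upwards [Metric.ball_mem_nhds x hr0] with y hy
  have hsub : segment ℝ x y ⊆ Metric.ball x r :=
    (convex_ball x r).segment_subset (Metric.mem_ball_self hr0) hy
  exact eq_zero_of_norm_fderiv_le_on_segment (fun z hz => (hr z (hsub hz)).1)
    (fun z hz => (hr z (hsub hz)).2) hx

theorem eqOn_zero_of_fderiv_isBigO (hU : IsOpen U) (hUc : IsPreconnected U)
    (hd : ∀ x ∈ U, DifferentiableAt ℝ u x) (hO : ∀ x ∈ U, fderiv ℝ u =O[𝓝 x] u)
    (hx : x ∈ U) (hux : u x = 0) : ∀ y ∈ U, u y = 0 := by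
  have hinterior {y} (hy : y ∈ U) (huy : u y = 0) : y ∈ interior {z | u z = 0} :=
    mem_interior_iff_mem_nhds.2 <| eventually_eq_zero_of_fderiv_isBigO
      (eventually_of_mem (hU.mem_nhds hy) hd) (hO y hy) huy
  refine fun y hy => interior_subset (s := {z | u z = 0})
    (hUc.subset_of_closure_inter_subset isOpen_interior ⟨x, hx, hinterior hx hux⟩
      (fun z hz => hinterior hz.2 ?_) hy)
  by_contra hne
  have hev : ∀ᶠ w in 𝓝 z, u w ≠ 0 := (hd z hz.2).continuousAt.eventually_ne hne
  obtain ⟨w, hw, hw'⟩ := mem_closure_iff_nhds.1 hz.1 _ hev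
  exact hw (interior_subset (s := {z | u z = 0}) hw')

/-- The size of the `k`-jet of `f` at `x`, that is, of all its derivatives of order at most `k`. -/
noncomputable def jetNorm (k : ℕ) (f : E → F) (x : E) : ℝ :=
  ∑ m ∈ Finset.range (k + 1), ‖iteratedFDeriv ℝ m f x‖

theorem jetNorm_nonneg (k : ℕ) (f : E → F) (x : E) : 0 ≤ jetNorm k f x :=
  Finset.sum_nonneg fun _ _ => norm_nonneg _

theorem norm_iteratedFDeriv_le_jetNorm {k m : ℕ} (hm : m ≤ k) (f : E → F) (x : E) :
    ‖iteratedFDeriv ℝ m f x‖ ≤ jetNorm k f x :=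
  Finset.single_le_sum (f := fun m => ‖iteratedFDeriv ℝ m f x‖) (fun _ _ => norm_nonneg _)
    (Finset.mem_range_succ_iff.2 hm)

theorem iteratedFDeriv_isBigO_jetNorm {k m : ℕ} (hm : m ≤ k) (f : E → F) (l : Filter E) :
    iteratedFDeriv ℝ m f =O[l] jetNorm k f :=
  .of_norm_le fun x => norm_iteratedFDeriv_le_jetNorm hm f x

theorem eqOn_zero_of_iteratedFDeriv_isBigO {k : ℕ} {f : E → F} (hU : IsOpen U)
    (hUc : IsPreconnected U) (hf : ContDiffOn ℝ ∞ f U)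
    (hO : ∀ x ∈ U, iteratedFDeriv ℝ (k + 1) f =O[𝓝 x] jetNorm k f)
    (hx : x ∈ U) (h0 : jetNorm k f x = 0) : ∀ y ∈ U, f y = 0 := by
  let u : E → ∀ m : Fin (k + 1), E [×m]→L[ℝ] F := fun y m => iteratedFDeriv ℝ m f y
  have hd (y : E) (hy : y ∈ U) (m : Fin (k + 1)) : DifferentiableAt ℝ (fun z => u z m) y :=
    (hf.contDiffAt (hU.mem_nhds hy)).differentiableAt_iteratedFDeriv
      (mod_cast WithTop.coe_lt_top _)
  have hjet (l : Filter E) : jetNorm k f =O[l] u :=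
    .fun_sum fun m hm => .norm_left <| Asymptotics.isBigO_of_le _ fun z =>
      norm_le_pi_norm (u z) ⟨m, Finset.mem_range.1 hm⟩
  have hbound (y : E) (hy : y ∈ U) :
      ‖fderiv ℝ u y‖ ≤ jetNorm k f y + ‖iteratedFDeriv ℝ (k + 1) f y‖ := by
    rw [fderiv_pi (hd y hy)]
    refine ContinuousLinearMap.norm_pi_le_of_le (fun m => ?_)
      (add_nonneg (jetNorm_nonneg k f y) (norm_nonneg _))
    rw [norm_fderiv_iteratedFDeriv]
    obtain hm | hm := (Nat.lt_succ_iff.1 m.2).lt_or_eq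
    · exact le_add_of_le_of_nonneg (norm_iteratedFDeriv_le_jetNorm hm f y) (norm_nonneg _)
    · rw [hm]
      exact le_add_of_nonneg_left (jetNorm_nonneg k f y)
  have hu : ∀ y ∈ U, u y = 0 := by
    refine eqOn_zero_of_fderiv_isBigO hU hUc (fun y hy => differentiableAt_pi.2 (hd y hy))
      (fun y hy => ?_) hx (funext fun m => norm_le_zero_iff.1 <|
        (norm_iteratedFDeriv_le_jetNorm (Nat.lt_succ_iff.1 m.2) f x).trans_eq h0)
    refine .trans (.of_norm_eventuallyLE ?_) ((hjet _).add ((hO y hy).trans (hjet _)).norm_left)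
    exact eventually_of_mem (hU.mem_nhds hy) hbound
  intro y hy
  have h : iteratedFDeriv ℝ 0 f y = 0 := congrFun (hu y hy) 0
  rw [← norm_eq_zero, ← norm_iteratedFDeriv_zero (𝕜 := ℝ), h, norm_zero]

end UniqueContinuation

section Jets

variable {E F G : Type*} [NormedAddCommGroup E] [NormedSpace ℝ E] [NormedAddCommGroup F]
  [NormedSpace ℝ F] [NormedAddCommGroup G] [NormedSpace ℝ G] {U : Set E} {x : E}

theorem jetNorm_eq_zero_iff {k : ℕ} {f : E → F} :
    jetNorm k f x = 0 ↔ ∀ m ≤ k, iteratedFDeriv ℝ m f x = 0 := by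
  simp only [jetNorm, Finset.sum_eq_zero_iff_of_nonneg fun _ _ => norm_nonneg _,
    Finset.mem_range_succ_iff, norm_eq_zero]

theorem jetNorm_add_eq_zero {k : ℕ} {f g : E → F} (hU : IsOpen U) (hf : ContDiffOn ℝ ∞ f U)
    (hg : ContDiffOn ℝ ∞ g U) (hx : x ∈ U) (hf0 : jetNorm k f x = 0) (hg0 : jetNorm k g x = 0) :
    jetNorm k (fun y => f y + g y) x = 0 := by
  rw [jetNorm_eq_zero_iff] at *
  intro m hm
  have hUx := hU.mem_nhds hx
  rw [fun_iteratedFDeriv_add_apply ((hf.contDiffAt hUx).of_le (mod_cast le_top))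
    ((hg.contDiffAt hUx).of_le (mod_cast le_top)), hf0 m hm, hg0 m hm, add_zero]

theorem jetNorm_clm_apply_isBigO {Λ : E → F →L[ℝ] G} {f : E → F} (k : ℕ) (hU : IsOpen U)
    (hΛ : ContDiffOn ℝ ∞ Λ U) (hf : ContDiffOn ℝ ∞ f U) (hx : x ∈ U) :
    jetNorm k (fun y => Λ y (f y)) =O[𝓝 x] jetNorm k f := by
  refine .fun_sum fun m hm => .norm_left ?_
  have hbound : ∀ y ∈ U, ‖iteratedFDeriv ℝ m (fun y => Λ y (f y)) y‖ ≤
      ‖ContinuousLinearMap.id ℝ (F →L[ℝ] G)‖ * ∑ i ∈ Finset.range (m + 1),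
        (m.choose i : ℝ) * ‖iteratedFDeriv ℝ i Λ y‖ * ‖iteratedFDeriv ℝ (m - i) f y‖ := by
    intro y hy
    simpa only [iteratedFDerivWithin_of_isOpen _ hU hy, ContinuousLinearMap.id_apply] using
      (ContinuousLinearMap.id ℝ (F →L[ℝ] G)).norm_iteratedFDerivWithin_le_of_bilinear
        hΛ hf hU.uniqueDiffOn hy (mod_cast le_top : (m : WithTop ℕ∞) ≤ ∞)
  refine .trans (.of_norm_eventuallyLE (eventually_of_mem (hU.mem_nhds hx) hbound)) ?_
  refine .const_mul_left (.fun_sum fun i _ => ?_) _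
  have hcont : ContinuousAt (iteratedFDeriv ℝ i Λ) x :=
    ((hΛ.contDiffAt (hU.mem_nhds hx)).differentiableAt_iteratedFDeriv
      (mod_cast WithTop.coe_lt_top _)).continuousAt
  have hΛO : (fun y => (m.choose i : ℝ) * ‖iteratedFDeriv ℝ i Λ y‖) =O[𝓝 x] fun _ => (1 : ℝ) :=
    (continuousAt_const.mul hcont.norm).tendsto.isBigO_one ℝ
  have hmi : m - i ≤ k := (m.sub_le i).trans (Finset.mem_range_succ_iff.1 hm)
  simpa only [one_mul] using hΛO.mul (iteratedFDeriv_isBigO_jetNorm hmi f _).norm_left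

theorem jetNorm_linearMap_apply_isBigO [FiniteDimensional ℝ F] {Λ : E → F →ₗ[ℝ] G} {f : E → F}
    (k : ℕ) (hU : IsOpen U) (hΛ : ∀ v, ContDiffOn ℝ ∞ (fun y => Λ y v) U)
    (hf : ContDiffOn ℝ ∞ f U) (hx : x ∈ U) :
    jetNorm k (fun y => Λ y (f y)) =O[𝓝 x] jetNorm k f :=
  jetNorm_clm_apply_isBigO (Λ := fun y => (Λ y).toContinuousLinearMap) k hU
    (contDiffOn_clm_apply.2 hΛ) hf hx

theorem jetNorm_linearMap_apply_eq_zero [FiniteDimensional ℝ F] {Λ : E → F →ₗ[ℝ] G} {f : E → F}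
    {k : ℕ} (hU : IsOpen U) (hΛ : ∀ v, ContDiffOn ℝ ∞ (fun y => Λ y v) U)
    (hf : ContDiffOn ℝ ∞ f U) (hx : x ∈ U) (h0 : jetNorm k f x = 0) :
    jetNorm k (fun y => Λ y (f y)) x = 0 :=
  (jetNorm_linearMap_apply_isBigO k hU hΛ hf hx).eq_zero_imp.self_of_nhds h0

end Jets

section BigO

/-- The functions that are `O(g)` along the filter `l`, as a subspace. Working modulo it turns
asymptotic bounds into linear algebra. -/
def isBigOSubmodule {α : Type*} (l : Filter α) (g : α → ℝ) : Submodule ℝ (α → ℝ) where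
  carrier := {f | f =O[l] g}
  add_mem' := Asymptotics.IsBigO.add
  zero_mem' := Asymptotics.isBigO_zero g l
  smul_mem' c _ hf := hf.const_mul_left c

theorem eq_zero_of_cubic_diagonal {V M : Type*} [AddCommGroup V] [AddCommGroup M] [Module ℝ M]
    {X : V → V → V → V → V → M} (h12 : ∀ a b c d e, X a b c d e = X b a c d e)
    (h23 : ∀ a b c d e, X a b c d e = X a c b d e) (h45 : ∀ a b c d e, X a b c d e = X a b c e d)
    (hadd3 : ∀ a b c c' d e, X a b (c + c') d e = X a b c d e + X a b c' d e)
    (hadd4 : ∀ a b c d d' e, X a b c (d + d') e = X a b c d e + X a b c d' e)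
    (h : ∀ a b w, X a b w w w = 0) (a b c d e : V) : X a b c d e = 0 := by
  have hadd5 (a b c d e e' : V) : X a b c d (e + e') = X a b c d e + X a b c d e' := by
    rw [h45, hadd4, h45 a b c e, h45 a b c e']
  have hcyc (a b c d e : V) : X a b c d e + X a b d e c + X a b e c d = 0 := by
    have h₁ := h a b (c + d + e)
    have h₂ := h a b (c + d)
    have h₃ := h a b (c + e)
    have h₄ := h a b (d + e)
    simp only [hadd3, hadd4, hadd5, h, h45] at h₁ h₂ h₃ h₄
    linear_combination (norm := (simp only [h45]; module)) (1 / 2 : ℝ) • (h₁ - h₂ - h₃ - h₄)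
  -- The cyclic sums are indexed by the pairs in `{a, b, c, d, e}`, and the one of a pair is the sum
  -- of `X` over the disjoint pairs: this is the Petersen graph, whose adjacency matrix `A` has
  -- inverse `(A + 1) / 2 - J / 6`, where `J` is the all-ones matrix.
  linear_combination (norm := (simp only [h12, h23, h45]; module))
    (1 / 2 : ℝ) • (hcyc d e a b c + hcyc a b c d e + hcyc a c b d e + hcyc b c a d e) -
      (1 / 6 : ℝ) • (hcyc a b c d e + hcyc a c b d e + hcyc a d b c e + hcyc a e b c d +
        hcyc b c a d e + hcyc b d a c e + hcyc b e a c d + hcyc c d a b e + hcyc c e a b d +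
        hcyc d e a b c)

theorem isBigO_clm_of_apply {α E F : Type*} [NormedAddCommGroup E] [NormedSpace ℝ E]
    [FiniteDimensional ℝ E] [NormedAddCommGroup F] [NormedSpace ℝ F] {l : Filter α} {g : α → ℝ}
    {Φ : α → E →L[ℝ] F} (h : ∀ v, (fun y => Φ y v) =O[l] g) : Φ =O[l] g := by
  let e := Module.finBasis ℝ E
  obtain ⟨C, -, hC⟩ := e.exists_opNorm_le (F := F)
  refine .trans (.of_norm_le (g := fun y => C * ∑ i, ‖Φ y (e i)‖) fun y => ?_)
    (.const_mul_left (.fun_sum fun i _ => (h (e i)).norm_left) C)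
  exact hC (Finset.sum_nonneg fun _ _ => norm_nonneg _) fun i =>
    Finset.single_le_sum (f := fun i => ‖Φ y (e i)‖) (fun _ _ => norm_nonneg _) (Finset.mem_univ i)

theorem isBigO_continuousMultilinearMap_of_apply {α E F : Type*} [NormedAddCommGroup E]
    [NormedSpace ℝ E] [FiniteDimensional ℝ E] [NormedAddCommGroup F] [NormedSpace ℝ F]
    {l : Filter α} {g : α → ℝ} {k : ℕ} {Φ : α → E [×k]→L[ℝ] F}
    (h : ∀ m, (fun y => Φ y m) =O[l] g) : Φ =O[l] g := by
  induction k with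
  | zero => exact .of_norm_left ((h 0).norm_left.congr_left fun y => (Φ y).fin0_apply_norm)
  | succ k ih =>
    have hcurry := (isBigO_clm_of_apply (Φ := fun y => (Φ y).curryLeft) fun v =>
      ih fun m => h (Fin.cons v m)).norm_left
    exact .trans (.of_norm_le fun y => (Φ y).curryLeft_norm.ge) hcurry

end BigO

section ThirdDerivative

variable {E F : Type*} [NormedAddCommGroup E] [NormedSpace ℝ E] [NormedAddCommGroup F]
  [NormedSpace ℝ F] {U : Set E} {f : E → F} {x : E}

theorem isSymmSndFDerivAt_of_contDiffOn (hU : IsOpen U) (hf : ContDiffOn ℝ ∞ f U) (hx : x ∈ U) :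
    IsSymmSndFDerivAt ℝ f x :=
  (hf.contDiffAt (hU.mem_nhds hx)).isSymmSndFDerivAt
    (by simpa using (mod_cast le_top : ((2 : ℕ∞) : WithTop ℕ∞) ≤ ∞))

theorem thirdFDeriv_swap_right (hU : IsOpen U) (hf : ContDiffOn ℝ ∞ f U) (hx : x ∈ U)
    (a b c : E) :
    fderiv ℝ (fderiv ℝ (fderiv ℝ f)) x a b c = fderiv ℝ (fderiv ℝ (fderiv ℝ f)) x a c b := by
  have hf'' : ContDiffOn ℝ ∞ (fderiv ℝ (fderiv ℝ f)) U :=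
    (hf.fderiv_of_isOpen hU le_rfl).fderiv_of_isOpen hU le_rfl
  have hfderiv (b c : E) : fderiv ℝ (fun y => fderiv ℝ (fderiv ℝ f) y b c) x a =
      fderiv ℝ (fderiv ℝ (fderiv ℝ f)) x a b c :=
    congrArg (· a) (((ContinuousLinearMap.apply ℝ F c).comp
      (ContinuousLinearMap.apply ℝ (E →L[ℝ] F) b)).hasFDerivAt.comp x
        (differentiableAt_of_contDiffOn hf'' hU hx).hasFDerivAt).fderiv
  have hflip : (fun y => fderiv ℝ (fderiv ℝ f) y b c) =ᶠ[𝓝 x]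
      fun y => fderiv ℝ (fderiv ℝ f) y c b :=
    eventually_of_mem (hU.mem_nhds hx) fun y hy =>
      (isSymmSndFDerivAt_of_contDiffOn hU hf hy).eq b c
  rw [← hfderiv, ← hfderiv, hflip.fderiv_eq]

theorem thirdFDeriv_apply_of_clm {G : Type*} [NormedAddCommGroup G] [NormedSpace ℝ G]
    (hU : IsOpen U) (hf : ContDiffOn ℝ ∞ f U) (hx : x ∈ U) (Λ : (E →L[ℝ] F) →L[ℝ] G) (a b : E) :
    iteratedFDeriv ℝ 2 (fun y => Λ (fderiv ℝ f y)) x ![a, b] =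
      Λ (fderiv ℝ (fderiv ℝ (fderiv ℝ f)) x a b) := by
  have hf' : ContDiffOn ℝ ∞ (fderiv ℝ f) U := hf.fderiv_of_isOpen hU le_rfl
  have h := Λ.iteratedFDeriv_comp_left (hf'.contDiffAt (hU.mem_nhds hx))
    (mod_cast (le_top : ((2 : ℕ) : ℕ∞) ≤ ⊤))
  exact (congrArg (fun T => T ![a, b]) h).trans
    (congrArg Λ (iteratedFDeriv_two_apply (fderiv ℝ f) x ![a, b]))

theorem iteratedFDeriv_three_apply (f : E → F) (x : E) (m : Fin 3 → E) :
    iteratedFDeriv ℝ 3 f x m = fderiv ℝ (fderiv ℝ (fderiv ℝ f)) x (m 0) (m 1) (m 2) :=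
  (iteratedFDeriv_succ_apply_right m).trans
    (congrArg (· (m 2)) (iteratedFDeriv_two_apply (fderiv ℝ f) x (Fin.init m)))

theorem thirdFDeriv_isBigO_of_cubic {B : E → E → F →L[ℝ] ℝ} {g : E → ℝ} (hU : IsOpen U)
    (hf : ContDiffOn ℝ ∞ f U) (hB : ∀ d d' e, B (d + d') e = B d e + B d' e)
    (hs : ∀ y ∈ U, ∀ d e, B d e (f y) = B e d (f y)) (hx : x ∈ U)
    (h : ∀ w, iteratedFDeriv ℝ 2 (fun y => B w w (fderiv ℝ f y w)) =O[𝓝 x] g) (a b c d e : E) :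
    (fun y => B d e (fderiv ℝ (fderiv ℝ (fderiv ℝ f)) y a b c)) =O[𝓝 x] g := by
  let N := isBigOSubmodule (𝓝 x) g
  let X (a b c d e : E) : (E → ℝ) ⧸ N :=
    N.mkQ fun y => B d e (fderiv ℝ (fderiv ℝ (fderiv ℝ f)) y a b c)
  have hX {f₁ f₂ : E → ℝ} (hf : ∀ y ∈ U, f₁ y = f₂ y) : N.mkQ f₁ = N.mkQ f₂ := by
    refine (Submodule.Quotient.eq N).2 (EventuallyEq.trans_isBigO ?_ (Asymptotics.isBigO_zero g _))
    exact eventually_of_mem (hU.mem_nhds hx) fun y hy => sub_eq_zero.2 (hf y hy)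
  have hD {y} (hy : y ∈ U) (a b c d e : E) :
      iteratedFDeriv ℝ 2 (fun y => B d e (fderiv ℝ f y c)) y ![a, b] =
        B d e (fderiv ℝ (fderiv ℝ (fderiv ℝ f)) y a b c) :=
    thirdFDeriv_apply_of_clm hU hf hy ((B d e).comp (ContinuousLinearMap.apply ℝ _ c)) a b
  have h45 (a b c d e : E) : X a b c d e = X a b c e d := hX fun y hy => by
    have hfderiv {z} (hz : z ∈ U) (d e : E) :
        fderiv ℝ (fun y => B d e (f y)) z c = B d e (fderiv ℝ f z c) :=
      congrArg (· c) ((B d e).hasFDerivAt.comp z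
        (differentiableAt_of_contDiffOn hf hU hz).hasFDerivAt).fderiv
    have hswap : (fun y => B d e (fderiv ℝ f y c)) =ᶠ[𝓝 y] fun y => B e d (fderiv ℝ f y c) :=
      eventually_of_mem (hU.mem_nhds hy) fun z hz => by
        have hz' : (fun y => B d e (f y)) =ᶠ[𝓝 z] fun y => B e d (f y) :=
          eventually_of_mem (hU.mem_nhds hz) fun w hw => hs w hw d e
        change B d e (fderiv ℝ f z c) = B e d (fderiv ℝ f z c)
        rw [← hfderiv hz, ← hfderiv hz, hz'.fderiv_eq]
    rw [← hD hy, ← hD hy, (EventuallyEq.iteratedFDeriv ℝ hswap 2).self_of_nhds]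
  have hcubic (a b w : E) : X a b w w w = 0 := by
    refine (hX fun y hy => (hD hy a b w w w).symm).trans ?_
    refine (Submodule.Quotient.mk_eq_zero N).2 (.trans (.of_bound (‖a‖ * ‖b‖) ?_) (h w))
    refine .of_forall fun y => (ContinuousMultilinearMap.le_opNorm _ _).trans_eq ?_
    rw [Fin.prod_univ_two, mul_comm, cons_val_zero, cons_val_one, cons_val_zero]
  refine (Submodule.Quotient.mk_eq_zero N).1 (eq_zero_of_cubic_diagonal (X := X) ?_ ?_ h45 ?_ ?_
    hcubic a b c d e)
  · exact fun a b c d e => hX fun y hy => by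
      rw [(isSymmSndFDerivAt_of_contDiffOn hU (hf.fderiv_of_isOpen hU le_rfl) hy).eq a b]
  · exact fun a b c d e => hX fun y hy => by rw [thirdFDeriv_swap_right hU hf hy]
  · exact fun a b c c' d e =>
      (hX fun y _ => by rw [map_add, map_add]; rfl).trans (map_add N.mkQ _ _)
  · exact fun a b c d d' e => (hX fun y _ => by rw [hB]; rfl).trans (map_add N.mkQ _ _)

end ThirdDerivative

section MatrixBigO

variable {ι α : Type*} [Fintype ι] [DecidableEq ι]

theorem isBigO_matrix_of_dotProduct_mulVec {l : Filter α} {g : α → ℝ} {A : α → Matrix ι ι ℝ}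
    (h : ∀ v w, (fun y => v ⬝ᵥ A y *ᵥ w) =O[l] g) : A =O[l] g := by
  have hA : A = fun y => ∑ i, ∑ j,
      (Pi.single i 1 ⬝ᵥ A y *ᵥ Pi.single j 1) • Matrix.single i j (1 : ℝ) := by
    funext y
    simpa [Matrix.smul_single] using matrix_eq_sum_single (A y)
  have hconst (i j : ι) : (fun _ => Matrix.single i j (1 : ℝ)) =O[l] fun _ : α => (1 : ℝ) :=
    Asymptotics.isBigO_const_const _ one_ne_zero l
  rw [hA]
  refine .fun_sum fun i _ => .fun_sum fun j _ => ?_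
  simpa only [smul_eq_mul, mul_one] using (h _ _).smul (hconst i j)

end MatrixBigO

section MatrixKilling

variable {ι : Type*} [Fintype ι] [DecidableEq ι] {U : Set (ι → ℝ)} {x : ι → ℝ}
  {G L l : (ι → ℝ) → Matrix ι ι ℝ}

/-- The linear form `m ↦ p ⬝ᵥ DG[G m w] p - 2 p ⬝ᵥ DG[w] m w`, where `p = G⁻¹ w`. If `G l G` is a
Killing tensor of the inverse metric `G`, then `w ⬝ᵥ Dl[w] w` is the value of this form at `l`. -/
noncomputable def killingForm (G : (ι → ℝ) → Matrix ι ι ℝ) (w x : ι → ℝ) :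
    Matrix ι ι ℝ →ₗ[ℝ] ℝ where
  toFun m := ((G x)⁻¹ *ᵥ w) ⬝ᵥ fderiv ℝ G x (G x *ᵥ m *ᵥ w) *ᵥ (G x)⁻¹ *ᵥ w -
    2 * (((G x)⁻¹ *ᵥ w) ⬝ᵥ fderiv ℝ G x w *ᵥ m *ᵥ w)
  map_add' m m' := by
    simp only [add_mulVec, mulVec_add, map_add, dotProduct_add]
    ring
  map_smul' c m := by
    simp only [smul_mulVec, mulVec_smul, map_smul, dotProduct_smul, smul_eq_mul, RingHom.id_apply]
    ring

theorem killingForm_apply (G : (ι → ℝ) → Matrix ι ι ℝ) (w x : ι → ℝ) (m : Matrix ι ι ℝ) :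
    killingForm G w x m =
      ((G x)⁻¹ *ᵥ w) ⬝ᵥ fderiv ℝ G x (G x *ᵥ m *ᵥ w) *ᵥ (G x)⁻¹ *ᵥ w -
        2 * (((G x)⁻¹ *ᵥ w) ⬝ᵥ fderiv ℝ G x w *ᵥ m *ᵥ w) :=
  rfl

theorem contDiffOn_killingForm_apply (hU : IsOpen U) (hG : ContDiffOn ℝ ∞ G U)
    (hGu : ∀ x ∈ U, IsUnit (G x)) (w : ι → ℝ) (m : Matrix ι ι ℝ) :
    ContDiffOn ℝ ∞ (fun x => killingForm G w x m) U := by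
  have hp : ContDiffOn ℝ ∞ (fun x => (G x)⁻¹ *ᵥ w) U :=
    contDiffOn_matrix_mulVec (contDiffOn_matrix_inv hG hGu) contDiffOn_const
  have hGm : ContDiffOn ℝ ∞ (fun x => G x *ᵥ m *ᵥ w) U :=
    contDiffOn_matrix_mulVec hG contDiffOn_const
  exact (contDiffOn_dotProduct hp
    (contDiffOn_matrix_mulVec (contDiffOn_fderiv_apply hU hG hGm) hp)).sub
      (contDiffOn_const.mul (contDiffOn_dotProduct hp (contDiffOn_matrix_mulVec
        (contDiffOn_fderiv_apply hU hG contDiffOn_const) contDiffOn_const)))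

theorem dotProduct_fderiv_mulVec_eq_killingForm (hU : IsOpen U) (hG : ContDiffOn ℝ ∞ G U)
    (hGs : ∀ x ∈ U, (G x).IsSymm) (hGu : ∀ x ∈ U, IsUnit (G x)) (hl : ContDiffOn ℝ ∞ l U)
    (hls : ∀ x ∈ U, (l x).IsSymm) (hGl : InvolutiveOn U G fun x => G x * l x * G x)
    (w : ι → ℝ) (hx : x ∈ U) : w ⬝ᵥ fderiv ℝ l x w *ᵥ w = killingForm G w x (l x) := by
  have hGd := differentiableAt_of_contDiffOn hG hU hx
  have hld := differentiableAt_of_contDiffOn hl hU hx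
  set p := (G x)⁻¹ *ᵥ w with hp
  have hGp : G x *ᵥ p = w := by
    rw [hp, mulVec_mulVec, mul_nonsing_inv _ ((isUnit_iff_isUnit_det _).1 (hGu x hx)), one_mulVec]
  have hsymm : l x *ᵥ w ⬝ᵥ fderiv ℝ G x w *ᵥ p = p ⬝ᵥ fderiv ℝ G x w *ᵥ l x *ᵥ w :=
    dotProduct_mulVec_comm_of_isSymm
      (fderiv_isSymm hGd (eventually_of_mem (hU.mem_nhds hx) hGs) w) _ _
  have hGdot (v : ι → ℝ) : p ⬝ᵥ G x *ᵥ v = w ⬝ᵥ v := by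
    rw [dotProduct_mulVec_comm_of_isSymm (hGs x hx), hGp, dotProduct_comm]
  have hldot (v : ι → ℝ) : w ⬝ᵥ l x *ᵥ v = l x *ᵥ w ⬝ᵥ v := by
    rw [dotProduct_mulVec_comm_of_isSymm (hls x hx), dotProduct_comm]
  have h := hGl x hx p
  simp only [fderiv_matrix_mul (hGd.fun_mul hld) hGd, fderiv_matrix_mul hGd hld, hGp, add_mul,
    add_mulVec, dotProduct_add, ← mulVec_mulVec, hGdot, hldot, hsymm] at h
  rw [killingForm_apply, h]
  ring

theorem eqOn_zero_of_killing_lowered (hU : IsOpen U) (hUc : IsPreconnected U)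
    (hG : ContDiffOn ℝ ∞ G U)
    (hGs : ∀ x ∈ U, (G x).IsSymm) (hGu : ∀ x ∈ U, IsUnit (G x)) (hl : ContDiffOn ℝ ∞ l U)
    (hls : ∀ x ∈ U, (l x).IsSymm) (hGl : InvolutiveOn U G fun x => G x * l x * G x)
    (hx : x ∈ U) (h0 : jetNorm 2 l x = 0) : ∀ y ∈ U, l y = 0 := by
  refine eqOn_zero_of_iteratedFDeriv_isBigO hU hUc hl (fun y hy => ?_) hx h0
  let B (d e : ι → ℝ) : Matrix ι ι ℝ →L[ℝ] ℝ := (dotProductCLM ι d).comp ((mulVecCLM ι).flip e)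
  have hcubic (w : ι → ℝ) :
      iteratedFDeriv ℝ 2 (fun y => B w w (fderiv ℝ l y w)) =O[𝓝 y] jetNorm 2 l := by
    have heq : (fun y => B w w (fderiv ℝ l y w)) =ᶠ[𝓝 y] fun y => killingForm G w y (l y) :=
      eventually_of_mem (hU.mem_nhds hy) fun z hz =>
        dotProduct_fderiv_mulVec_eq_killingForm hU hG hGs hGu hl hls hGl w hz
    exact (EventuallyEq.iteratedFDeriv ℝ heq 2).trans_isBigO <|
      (iteratedFDeriv_isBigO_jetNorm le_rfl _ _).trans <|
        jetNorm_linearMap_apply_isBigO 2 hU (contDiffOn_killingForm_apply hU hG hGu w) hl hy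
  refine isBigO_continuousMultilinearMap_of_apply fun m =>
    isBigO_matrix_of_dotProduct_mulVec fun d e => ?_
  have hB : ∀ d d' e, B (d + d') e = B d e + B d' e := fun d d' e =>
    ContinuousLinearMap.ext fun m => add_dotProduct _ _ _
  refine (thirdFDeriv_isBigO_of_cubic hU hl hB (fun z hz d e =>
    dotProduct_mulVec_comm_of_isSymm (hls z hz) d e) hy hcubic (m 0) (m 1) (m 2) d e).congr_left
      fun y => ?_
  rw [iteratedFDeriv_three_apply]
  rfl

theorem eqOn_zero_of_involutiveOn (hU : IsOpen U) (hUc : IsPreconnected U)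
    (hG : ContDiffOn ℝ ∞ G U) (hGs : ∀ x ∈ U, (G x).IsSymm) (hGu : ∀ x ∈ U, IsUnit (G x))
    (hL : ContDiffOn ℝ ∞ L U) (hLs : ∀ x ∈ U, (L x).IsSymm) (hGL : InvolutiveOn U G L)
    (hx : x ∈ U) (h0 : jetNorm 2 L x = 0) : ∀ y ∈ U, L y = 0 := by
  let Λ (y : ι → ℝ) := LinearMap.mulLeftRight ℝ ((G y)⁻¹, (G y)⁻¹)
  have hGi := contDiffOn_matrix_inv hG hGu
  have hΛ (m : Matrix ι ι ℝ) : ContDiffOn ℝ ∞ (fun y => Λ y m) U :=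
    (hGi.mul contDiffOn_const).mul hGi
  have hLl {y} (hy : y ∈ U) : G y * Λ y (L y) * G y = L y := by
    have hdet := (isUnit_iff_isUnit_det _).1 (hGu y hy)
    simp only [Λ, LinearMap.mulLeftRight_apply, ← mul_assoc, mul_nonsing_inv _ hdet, one_mul]
    rw [mul_assoc, nonsing_inv_mul _ hdet, mul_one]
  have hGl : InvolutiveOn U G fun y => G y * Λ y (L y) * G y := fun y hy p => by
    have h : (fun y => G y * Λ y (L y) * G y) =ᶠ[𝓝 y] L :=
      eventually_of_mem (hU.mem_nhds hy) fun z hz => hLl hz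
    simp only [h.fderiv_eq, hLl hy]
    exact hGL y hy p
  have hls : ∀ y ∈ U, (Λ y (L y)).IsSymm := fun y hy => by
    simp only [Λ, LinearMap.mulLeftRight_apply, Matrix.IsSymm, transpose_mul,
      transpose_nonsing_inv, (hGs y hy).eq, (hLs y hy).eq, mul_assoc]
  have hl : ContDiffOn ℝ ∞ (fun y => Λ y (L y)) U := (hGi.mul hL).mul hGi
  intro y hy
  rw [← hLl hy, eqOn_zero_of_killing_lowered hU hUc hG hGs hGu hl hls hGl hx
    (jetNorm_linearMap_apply_eq_zero hU hΛ hL hx h0) y hy, mul_zero, zero_mul]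

end MatrixKilling

section ZeroSets

theorem finiteDimensional_continuousMultilinearMap {E F : Type*}
    [NormedAddCommGroup E] [NormedSpace ℝ E] [FiniteDimensional ℝ E] [NormedAddCommGroup F]
    [NormedSpace ℝ F] [FiniteDimensional ℝ F] (m : ℕ) :
    FiniteDimensional ℝ (E [×m]→L[ℝ] F) :=
  FiniteDimensional.of_injective
    (ContinuousMultilinearMap.toMultilinearMapLinear (R' := ℝ) (A := ℝ) (M₁ := fun _ : Fin m => E))
    ContinuousMultilinearMap.toMultilinearMap_injective

variable {E F : Type*} [NormedAddCommGroup E] [NormedSpace ℝ E] [FiniteDimensional ℝ E]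
  [MeasurableSpace E] [BorelSpace E] [NormedAddCommGroup F] [NormedSpace ℝ F]
  [FiniteDimensional ℝ F] {U : Set E}

theorem ae_fderiv_eq_zero_of_real_eq_zero {f : E → ℝ} (μ : Measure E) [μ.IsAddHaarMeasure]
    (hU : IsOpen U) (hf : DifferentiableOn ℝ f U) :
    ∀ᵐ x ∂μ, x ∈ U → f x = 0 → fderiv ℝ f x = 0 := by
  obtain hE | hE := subsingleton_or_nontrivial E
  · exact .of_forall fun x _ _ => Subsingleton.elim _ _
  obtain ⟨v, hv⟩ := exists_ne (0 : E)
  have hmeas : MeasurableSet (U ∩ {x | f x = 0}) := by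
    have h : U ∩ {x | f x = 0} = U \ (U ∩ f ⁻¹' {0}ᶜ) := by
      ext x
      simp
    rw [h]
    exact hU.measurableSet.diff
      (hf.continuousOn.isOpen_inter_preimage hU isOpen_compl_singleton).measurableSet
  have happrox : ApproximatesLinearOn (fun x => f x • v) (0 : E →L[ℝ] E)
      (U ∩ {x | f x = 0}) 0 := by
    rintro x ⟨-, hx⟩ y ⟨-, hy⟩
    have hxy : f x = f y := hx.trans hy.symm
    simp [hxy]
  have h := happrox.norm_fderiv_sub_le μ hmeas (fun x => (fderiv ℝ f x).smulRight v)
    fun x hx =>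
      ((hf.differentiableAt (hU.mem_nhds hx.1)).hasFDerivAt.smul_const v).hasFDerivWithinAt
  filter_upwards [(ae_restrict_iff' hmeas).1 h] with x hx hxU hfx
  simpa [hv] using hx ⟨hxU, hfx⟩

theorem ae_fderiv_eq_zero_of_eq_zero {f : E → F} (μ : Measure E) [μ.IsAddHaarMeasure]
    (hU : IsOpen U) (hf : DifferentiableOn ℝ f U) :
    ∀ᵐ x ∂μ, x ∈ U → f x = 0 → fderiv ℝ f x = 0 := by
  let b := Module.finBasis ℝ F
  have hcoord (i) : ∀ᵐ x ∂μ, x ∈ U → (b.coord i).toContinuousLinearMap (f x) = 0 →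
      fderiv ℝ (fun y => (b.coord i).toContinuousLinearMap (f y)) x = 0 :=
    ae_fderiv_eq_zero_of_real_eq_zero μ hU
      ((b.coord i).toContinuousLinearMap.differentiable.comp_differentiableOn hf)
  filter_upwards [ae_all_iff.2 hcoord] with x hx hxU hfx
  ext w
  refine b.ext_elem fun i => ?_
  have hfd := ((b.coord i).toContinuousLinearMap.hasFDerivAt.comp x
    (hf.differentiableAt (hU.mem_nhds hxU)).hasFDerivAt).fderiv
  have h := hfd.symm.trans (hx i hxU (by rw [hfx, map_zero]))
  simpa using congrArg (· w) h

theorem ae_jetNorm_eq_zero_of_eq_zero {f : E → F} (μ : Measure E) [μ.IsAddHaarMeasure]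
    (hU : IsOpen U) (hf : ContDiffOn ℝ ∞ f U) :
    ∀ᵐ x ∂μ, x ∈ U → f x = 0 → ∀ k, jetNorm k f x = 0 := by
  have hstep (m : ℕ) : ∀ᵐ x ∂μ, x ∈ U → iteratedFDeriv ℝ m f x = 0 →
      fderiv ℝ (iteratedFDeriv ℝ m f) x = 0 := by
    have := finiteDimensional_continuousMultilinearMap (E := E) (F := F) m
    refine ae_fderiv_eq_zero_of_eq_zero μ hU fun x hx => ?_
    exact ((hf.contDiffAt (hU.mem_nhds hx)).differentiableAt_iteratedFDeriv
      (mod_cast WithTop.coe_lt_top _)).differentiableWithinAt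
  filter_upwards [ae_all_iff.2 hstep] with x hx hxU hfx k
  suffices h : ∀ m, iteratedFDeriv ℝ m f x = 0 from jetNorm_eq_zero_iff.2 fun m _ => h m
  intro m
  induction m with
  | zero => rw [← norm_eq_zero, norm_iteratedFDeriv_zero, hfx, norm_zero]
  | succ m ih =>
    ext v
    rw [iteratedFDeriv_succ_apply_left, hx m hxU ih]
    rfl

end ZeroSets

section Coefficients

variable {κ E F : Type*} [Fintype κ] [NormedAddCommGroup E] [NormedSpace ℝ E]
  [NormedAddCommGroup F] [NormedSpace ℝ F] [FiniteDimensional ℝ F] {U : Set E} {x : E}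

theorem exists_smooth_coefficients {k : κ → E → F} {w : E → F} (hU : IsOpen U)
    (hk : ∀ α, ContDiffOn ℝ ∞ (k α) U) (hw : ContDiffOn ℝ ∞ w U) (hx : x ∈ U)
    (hind : LinearIndependent ℝ fun α => k α x) :
    ∃ V ⊆ U, IsOpen V ∧ x ∈ V ∧ ∃ c : E → κ → ℝ, ContDiffOn ℝ ∞ c V ∧
      ∀ y ∈ V, ∀ a : κ → ℝ, w y = ∑ α, a α • k α y → c y = a := by
  obtain ⟨ℓ, hℓ⟩ := (Fintype.linearCombination ℝ fun α => k α x).exists_leftInverse_of_injective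
    (LinearMap.ker_eq_bot.2 (linearIndependent_iff_injective_fintypeLinearCombination.1 hind))
  let T (y : E) : (κ → ℝ) →L[ℝ] (κ → ℝ) :=
    (ℓ ∘ₗ Fintype.linearCombination ℝ fun α => k α y).toContinuousLinearMap
  have hT : ContDiffOn ℝ ∞ T U := contDiffOn_clm_apply.2 fun a =>
    ℓ.toContinuousLinearMap.contDiff.comp_contDiffOn (.sum fun α _ => contDiffOn_const.smul (hk α))
  have hTx : T x = 1 := by
    ext1 a
    exact congrArg (· a) hℓ
  refine ⟨U ∩ T ⁻¹' {A | IsUnit A}, Set.inter_subset_left,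
    hT.continuousOn.isOpen_inter_preimage hU Units.isOpen,
    ⟨hx, show IsUnit (T x) from hTx ▸ isUnit_one⟩, fun y => Ring.inverse (T y) (ℓ (w y)), ?_, ?_⟩
  · have hinv : ContDiffOn ℝ ∞ (fun y => Ring.inverse (T y)) (U ∩ T ⁻¹' {A | IsUnit A}) := by
      rintro y ⟨hy, a, ha⟩
      have h := contDiffAt_ringInverse ℝ (n := ∞) a
      rw [ha] at h
      exact h.comp_contDiffWithinAt y ((hT y hy).mono Set.inter_subset_left)
    exact hinv.clm_apply (ℓ.toContinuousLinearMap.contDiff.comp_contDiffOn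
      (hw.mono Set.inter_subset_left))
  · rintro y ⟨-, hy⟩ a ha
    have h : ℓ (w y) = T y a := congrArg ℓ ha
    refine (congrArg _ h).trans ?_
    exact congrArg (· a) (Ring.inverse_mul_cancel _ hy)

end Coefficients

section DiagonalForms

variable {ι κ : Type*} [Fintype ι] [Fintype κ]

theorem dotProduct_transpose_mulVec (B A : Matrix ι ι ℝ) (q : ι → ℝ) :
    (Bᵀ *ᵥ q) ⬝ᵥ A *ᵥ Bᵀ *ᵥ q = q ⬝ᵥ (B * A * Bᵀ) *ᵥ q := by
  rw [← mulVec_mulVec, ← mulVec_mulVec, dotProduct_mulVec q B, ← mulVec_transpose]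

theorem dotProduct_mulVec_of_isDiag {D : Matrix ι ι ℝ} (hD : D.IsDiag) (q : ι → ℝ) :
    q ⬝ᵥ D *ᵥ q = ∑ j, D j j * q j ^ 2 := by
  classical
  rw [← hD.diagonal_diag]
  simp only [mulVec_diagonal, dotProduct, diag_apply, diagonal_apply_eq]
  exact Finset.sum_congr rfl fun j _ => by ring

theorem eq_zero_of_sum_map_mul_sq {m : (ι → ℝ) →ₗ[ℝ] ι → ℝ}
    (h : ∀ q, ∑ j, m q j * q j ^ 2 = 0) : m = 0 := by
  classical
  have hdiag (j : ι) : m (Pi.single j 1) j = 0 := by simpa [Pi.single_apply] using h (Pi.single j 1)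
  have hsum {j k : ι} (hjk : j ≠ k) (t : ℝ) :
      t ^ 2 * m (Pi.single k 1) j + t * m (Pi.single j 1) k = 0 := by
    have h' := h (t • Pi.single j 1 + Pi.single k 1)
    rw [Finset.sum_eq_add j k hjk (fun i _ hi => by simp [hi.1, hi.2]) (by simp) (by simp)] at h'
    simp [hjk, hjk.symm, hdiag] at h'
    linear_combination h'
  refine LinearMap.pi_ext' fun k => LinearMap.ext_ring (funext fun j => ?_)
  obtain rfl | hjk := eq_or_ne j k
  · exact hdiag j
  · have h₁ := hsum hjk 1
    have h₂ := hsum hjk (-1)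
    change m (Pi.single k 1) j = 0
    linarith

theorem eq_zero_of_forall_mul_dotProduct_sq {a : ι → ℝ} {i j : ι} (hij : i ≠ j)
    (h : ∀ q : ι → ℝ, q i = 0 → q j * (a ⬝ᵥ q ^ 2) = 0) {k : ι} (hk : k ≠ i) : a k = 0 := by
  classical
  have hj : a j = 0 := by
    simpa [sq, ← Pi.single_mul, hij] using h (Pi.single j 1)
  obtain rfl | hkj := eq_or_ne k j
  · exact hj
  have hsq : (Pi.single j 1 + Pi.single k 1 : ι → ℝ) ^ 2 = Pi.single j 1 + Pi.single k 1 := by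
    ext l
    by_cases hlj : l = j <;> by_cases hlk : l = k <;> simp_all
  have hjk := h (Pi.single j 1 + Pi.single k 1) (by simp [hij, hk.symm])
  simpa [hsq, dotProduct_add, hj, hkj.symm] using hjk

theorem eq_zero_of_forall_mul_dotProduct {c : ι → ℝ} {i j : ι}
    (h : ∀ q : ι → ℝ, q i * q j * (q ⬝ᵥ c) = 0) : c = 0 := by
  classical
  have hpos (q : ι → ℝ) (hq : ∀ k, 0 < q k) : q ⬝ᵥ c = 0 :=
    (mul_eq_zero.1 (h q)).resolve_left (mul_pos (hq i) (hq j)).ne'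
  funext k
  have hone := hpos 1 fun _ => zero_lt_one
  have hk := hpos (1 + Pi.single k 1) fun l => by
    by_cases hl : l = k <;> simp [hl]
  simpa [add_dotProduct, hone] using hk

theorem eq_zero_of_sum_mul_quadraticForm [DecidableEq ι] {K : κ → Matrix ι ι ℝ}
    {G B : Matrix ι ι ℝ} (hG : IsUnit G) (hB : IsUnit B) (hK : ∀ α, (B * K α * Bᵀ).IsDiag)
    (hind : LinearIndependent ℝ K) {ξ : (ι → ℝ) →ₗ[ℝ] κ → ℝ}
    (h : ∀ p, ∑ α, ξ (G *ᵥ p) α * (p ⬝ᵥ K α *ᵥ p) = 0) : ξ = 0 := by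
  have hBT : IsUnit Bᵀ := (isUnit_transpose _).2 hB
  let η := ξ ∘ₗ (G * Bᵀ).mulVecLin
  let m : (ι → ℝ) →ₗ[ℝ] ι → ℝ :=
    LinearMap.pi fun j => Fintype.linearCombination ℝ (fun α => (B * K α * Bᵀ) j j) ∘ₗ η
  have hm : m = 0 := eq_zero_of_sum_map_mul_sq fun q => by
    rw [← h (Bᵀ *ᵥ q)]
    simp only [dotProduct_transpose_mulVec, dotProduct_mulVec_of_isDiag (hK _), Finset.mul_sum,
      mulVec_mulVec q G Bᵀ]
    rw [Finset.sum_comm]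
    refine Finset.sum_congr rfl fun j _ => ?_
    simp only [m, η, LinearMap.pi_apply, LinearMap.comp_apply, Fintype.linearCombination_apply,
      smul_eq_mul, Finset.sum_mul, mulVecLin_apply, mul_assoc]
  have hη (q : ι → ℝ) : η q = 0 := by
    have hsum : B * (∑ α, η q α • K α) * Bᵀ = 0 := by
      ext i j
      rw [Finset.mul_sum, Finset.sum_mul]
      simp only [Matrix.sum_apply, Matrix.mul_smul, Matrix.smul_mul, Matrix.smul_apply,
        Matrix.zero_apply]
      obtain rfl | hij := eq_or_ne i j
      · exact congrFun (congrArg (· q) hm) i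
      · exact Finset.sum_eq_zero fun α _ => by rw [hK α hij, smul_zero]
    exact funext fun α => Fintype.linearIndependent_iff.1 hind (η q)
      (hB.mul_right_eq_zero.1 (hBT.mul_left_eq_zero.1 hsum)) α
  refine LinearMap.ext fun v => ?_
  obtain ⟨q, rfl⟩ := mulVec_surjective_iff_isUnit.2 (hG.mul hBT) v
  exact hη q

end DiagonalForms

section Independence

variable {ι κ : Type*} [Fintype ι] [DecidableEq ι] [Fintype κ] {U : Set (ι → ℝ)} {x : ι → ℝ}
  {G L : (ι → ℝ) → Matrix ι ι ℝ} {K : κ → (ι → ℝ) → Matrix ι ι ℝ} {c : (ι → ℝ) → κ → ℝ}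

theorem fderiv_sum_smul {E F : Type*} [NormedAddCommGroup E] [NormedSpace ℝ E]
    [NormedAddCommGroup F] [NormedSpace ℝ F] {c : E → κ → ℝ} {k : κ → E → F} {x : E}
    (hc : DifferentiableAt ℝ c x) (hk : ∀ α, DifferentiableAt ℝ (k α) x) (u : E) :
    fderiv ℝ (fun y => ∑ α, c y α • k α y) x u =
      ∑ α, (c x α • fderiv ℝ (k α) x u + fderiv ℝ c x u α • k α x) := by
  have h := HasFDerivAt.fun_sum (u := Finset.univ) fun α _ =>
    (hasFDerivAt_pi'.1 hc.hasFDerivAt α).fun_smul (hk α).hasFDerivAt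
  rw [h.fderiv]
  simp

theorem fderiv_coefficients_eq_zero {B : Matrix ι ι ℝ} (hB : IsUnit B)
    (hKB : ∀ α, (B * K α x * Bᵀ).IsDiag) (hind : LinearIndependent ℝ fun α => K α x)
    (hGu : IsUnit (G x)) (hK : ∀ α, DifferentiableAt ℝ (K α) x) (hc : DifferentiableAt ℝ c x)
    (hx : x ∈ U) (hGK : ∀ α, InvolutiveOn U G (K α)) (hGL : InvolutiveOn U G L)
    (hLx : L x = ∑ α, c x α • K α x)
    (hL' : fderiv ℝ L x = fderiv ℝ (fun y => ∑ α, c y α • K α y) x) : fderiv ℝ c x = 0 := by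
  refine ContinuousLinearMap.coe_injective ?_
  refine eq_zero_of_sum_mul_quadraticForm hGu hB hKB hind fun p => ?_
  have h := hGL x hx p
  have hK' (α : κ) := hGK α x hx p
  have hL'' : fderiv ℝ L x (G x *ᵥ p) = _ :=
    (congrArg (· (G x *ᵥ p)) hL').trans (fderiv_sum_smul hc hK _)
  simp only [hL'', hLx, sum_mulVec, smul_mulVec, map_sum, map_smul,
    dotProduct_sum, add_mulVec, dotProduct_add, dotProduct_smul, Finset.sum_add_distrib, hK',
    smul_eq_mul] at h
  exact left_eq_add.1 h

theorem jetNorm_sub_const_eq_zero {E F : Type*} [NormedAddCommGroup E] [NormedSpace ℝ E]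
    [NormedAddCommGroup F] [NormedSpace ℝ F] {c : E → F} {x : E} {k : ℕ}
    (h : jetNorm k (fderiv ℝ c) x = 0) : jetNorm (k + 1) (fun y => c y - c x) x = 0 := by
  refine jetNorm_eq_zero_iff.2 fun m hm => ?_
  cases m with
  | zero => rw [← norm_eq_zero, norm_iteratedFDeriv_zero, sub_self, norm_zero]
  | succ m =>
    have hfderiv : fderiv ℝ (fun y => c y - c x) = fderiv ℝ c := funext fun y => fderiv_sub_const _
    have hm := jetNorm_eq_zero_iff.1 h m (Nat.le_of_succ_le_succ hm)
    rw [← norm_eq_zero, ← norm_iteratedFDeriv_fderiv, hfderiv]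
    exact norm_eq_zero.2 hm

end Independence

section KillingSpan

variable {ι κ : Type*} [Fintype ι] {U V : Set (ι → ℝ)} {x : ι → ℝ}
  {G L : (ι → ℝ) → Matrix ι ι ℝ} {K : κ → (ι → ℝ) → Matrix ι ι ℝ} {c : (ι → ℝ) → κ → ℝ}

/-- `L` is a contravariant Killing 2-tensor over `U` of the metric with inverse matrix `G`: the
quadratic form `p ⬝ᵥ L x *ᵥ p` is a smooth integral of the geodesic flow. -/
structure IsKillingTensorOn (U : Set (ι → ℝ)) (G L : (ι → ℝ) → Matrix ι ι ℝ) : Prop where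
  contDiffOn : ContDiffOn ℝ ∞ L U
  isSymm : ∀ x ∈ U, (L x).IsSymm
  involutiveOn : InvolutiveOn U G L

theorem IsKillingTensorOn.sub_sum_smul [Fintype κ] (hU : IsOpen U) (hL : IsKillingTensorOn U G L)
    (hK : ∀ α, IsKillingTensorOn U G (K α)) (a : κ → ℝ) :
    IsKillingTensorOn U G fun y => L y - ∑ α, a α • K α y where
  contDiffOn := hL.contDiffOn.sub (.sum fun α _ => (hK α).contDiffOn.const_smul (a α))
  isSymm x hx := by
    rw [Matrix.IsSymm, transpose_sub, transpose_sum, (hL.isSymm x hx).eq]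
    simp only [transpose_smul, ((hK _).isSymm x hx).eq]
  involutiveOn x hx p := by
    have hsum := HasFDerivAt.fun_sum (u := Finset.univ) fun α _ =>
      (differentiableAt_of_contDiffOn (hK α).contDiffOn hU hx).hasFDerivAt.fun_const_smul (a α)
    have h := (differentiableAt_of_contDiffOn hL.contDiffOn hU hx).hasFDerivAt.fun_sub hsum
    refine Eq.trans ?_ (congrArg (fun A => p ⬝ᵥ A (G x *ᵥ p) *ᵥ p) h.fderiv.symm)
    simp only [sub_mulVec, sum_mulVec, smul_mulVec, dotProduct_sum, dotProduct_sub, map_sub,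
      map_sum, map_smul, dotProduct_smul, hL.involutiveOn x hx p, (hK _).involutiveOn x hx p,
      _root_.sub_apply, _root_.sum_apply, _root_.smul_apply]
    rfl

variable [DecidableEq ι]

theorem eqOn_sum_smul_of_jetNorm_eq_zero [Fintype κ] (hU : IsOpen U) (hUc : IsPreconnected U)
    (hG : ContDiffOn ℝ ∞ G U) (hGs : ∀ x ∈ U, (G x).IsSymm) (hGu : ∀ x ∈ U, IsUnit (G x))
    (hK : ∀ α, IsKillingTensorOn U G (K α)) (hL : IsKillingTensorOn U G L)
    (hVU : V ⊆ U) (hV : IsOpen V) (hx : x ∈ V) (hc : ContDiffOn ℝ ∞ c V)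
    (hD : jetNorm 2 (fun y => L y - ∑ α, c y α • K α y) x = 0)
    (hc0 : jetNorm 1 (fderiv ℝ c) x = 0) : ∀ y ∈ U, L y = ∑ α, c x α • K α y := by
  have hKV (α : κ) : ContDiffOn ℝ ∞ (K α) V := (hK α).contDiffOn.mono hVU
  let Λ (y : ι → ℝ) := Fintype.linearCombination ℝ fun α => K α y
  have hΛ (a : κ → ℝ) : ContDiffOn ℝ ∞ (fun y => Λ y a) V :=
    .sum fun α _ => (hKV α).const_smul (a α)
  have hcΛ : ContDiffOn ℝ ∞ (fun y => Λ y (c y - c x)) V :=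
    .sum fun α _ => (contDiffOn_pi.1 (hc.sub contDiffOn_const) α).smul (hKV α)
  have hDV : ContDiffOn ℝ ∞ (fun y => L y - ∑ α, c y α • K α y) V :=
    (hL.contDiffOn.mono hVU).sub (.sum fun α _ => (contDiffOn_pi.1 hc α).smul (hKV α))
  have hjet := jetNorm_add_eq_zero hV hDV hcΛ hx hD <|
    jetNorm_linearMap_apply_eq_zero hV hΛ (hc.sub contDiffOn_const) hx
      (jetNorm_sub_const_eq_zero hc0)
  have hsplit : (fun y => (L y - ∑ α, c y α • K α y) + Λ y (c y - c x)) =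
      fun y => L y - ∑ α, c x α • K α y := by
    funext y
    simp [Λ, Fintype.linearCombination_apply, sub_smul]
  rw [hsplit] at hjet
  have hE := hL.sub_sum_smul hU hK (c x)
  exact fun y hy => sub_eq_zero.1 <|
    eqOn_zero_of_involutiveOn hU hUc hG hGs hGu hE.contDiffOn hE.isSymm hE.involutiveOn
      (hVU hx) hjet y hy

variable (μ : Measure (ι → ℝ)) [μ.IsAddHaarMeasure]

theorem ae_eqOn_sum_smul [Fintype κ] (hU : IsOpen U) (hUc : IsPreconnected U)
    (hG : ContDiffOn ℝ ∞ G U) (hGs : ∀ x ∈ U, (G x).IsSymm) (hGu : ∀ x ∈ U, IsUnit (G x))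
    (hK : ∀ α, IsKillingTensorOn U G (K α)) (hL : IsKillingTensorOn U G L)
    (hdiag : ∀ᵐ x ∂μ, x ∈ U → ∃ B : Matrix ι ι ℝ, IsUnit B ∧ ∀ α, (B * K α x * Bᵀ).IsDiag)
    (hVU : V ⊆ U) (hV : IsOpen V) (hc : ContDiffOn ℝ ∞ c V) :
    ∀ᵐ x ∂μ, x ∈ V → LinearIndependent ℝ (fun α => K α x) → L x = ∑ α, c x α • K α x →
      ∀ y ∈ U, L y = ∑ α, c x α • K α y := by
  have hsum : ContDiffOn ℝ ∞ (fun y => ∑ α, c y α • K α y) V :=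
    .sum fun α _ => (contDiffOn_pi.1 hc α).smul ((hK α).contDiffOn.mono hVU)
  have hLV := hL.contDiffOn.mono hVU
  filter_upwards [hdiag, ae_jetNorm_eq_zero_of_eq_zero μ hV (hLV.sub hsum),
    ae_jetNorm_eq_zero_of_eq_zero μ hV (hc.fderiv_of_isOpen hV le_rfl)]
    with x hB hD hc0 hxV hind hLx
  obtain ⟨B, hBu, hKB⟩ := hB (hVU hxV)
  have hDx := hD hxV (sub_eq_zero.2 hLx)
  refine eqOn_sum_smul_of_jetNorm_eq_zero hU hUc hG hGs hGu hK hL hVU hV hxV hc (hDx 2)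
    (hc0 hxV ?_ 1)
  have hD1 : fderiv ℝ (fun y => L y - ∑ α, c y α • K α y) x = 0 := by
    ext1 u
    exact (iteratedFDeriv_one_apply fun _ => u).symm.trans
      (congrArg (· fun _ => u) (jetNorm_eq_zero_iff.1 (hDx 1) 1 le_rfl))
  refine fderiv_coefficients_eq_zero hBu hKB hind (hGu x (hVU hxV))
    (fun α => differentiableAt_of_contDiffOn (hK α).contDiffOn hU (hVU hxV))
    (differentiableAt_of_contDiffOn hc hV hxV) (hVU hxV) (fun α => (hK α).involutiveOn)
    hL.involutiveOn hLx (sub_eq_zero.1 ((fderiv_fun_sub ?_ ?_).symm.trans hD1))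
  · exact differentiableAt_of_contDiffOn hLV hV hxV
  · exact differentiableAt_of_contDiffOn hsum hV hxV

theorem ae_notMem_span [Fintype κ] (hU : IsOpen U) (hUc : IsPreconnected U)
    (hG : ContDiffOn ℝ ∞ G U) (hGs : ∀ x ∈ U, (G x).IsSymm) (hGu : ∀ x ∈ U, IsUnit (G x))
    (hK : ∀ α, IsKillingTensorOn U G (K α)) (hL : IsKillingTensorOn U G L)
    (hdiag : ∀ᵐ x ∂μ, x ∈ U → ∃ B : Matrix ι ι ℝ, IsUnit B ∧ ∀ α, (B * K α x * Bᵀ).IsDiag)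
    (hne : ∀ a : κ → ℝ, ∃ y ∈ U, L y ≠ ∑ α, a α • K α y) :
    ∀ᵐ x ∂μ, x ∈ U → LinearIndependent ℝ (fun α => K α x) →
      L x ∉ Submodule.span ℝ (Set.range fun α => K α x) := by
  refine measure_null_of_locally_null _ fun x hx => ?_
  simp only [Set.mem_compl_iff, Set.mem_ofPred_eq, Classical.not_imp, not_not] at hx
  obtain ⟨hxU, hind, -⟩ := hx
  obtain ⟨V, hVU, hV, hxV, c, hc, hcV⟩ :=
    exists_smooth_coefficients hU (fun α => (hK α).contDiffOn) hL.contDiffOn hxU hind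
  have hae := ae_eqOn_sum_smul μ hU hUc hG hGs hGu hK hL hdiag hVU hV hc
  refine ⟨_, inter_mem_nhdsWithin _ (hV.mem_nhds hxV), measure_mono_null ?_ hae⟩
  rintro y ⟨hy, hyV⟩ hconst
  simp only [Set.mem_compl_iff, Set.mem_ofPred_eq, Classical.not_imp, not_not] at hy
  obtain ⟨-, hyind, hyspan⟩ := hy
  obtain ⟨a, ha⟩ := (Submodule.mem_span_range_iff_exists_fun ℝ).1 hyspan
  obtain rfl := hcV y hyV a ha.symm
  obtain ⟨z, hz, hLz⟩ := hne (c y)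
  exact hLz (hconst hyV hyind ha.symm z hz)

theorem ae_linearIndependent [Finite κ] (hU : IsOpen U) (hUc : IsPreconnected U)
    (hG : ContDiffOn ℝ ∞ G U) (hGs : ∀ x ∈ U, (G x).IsSymm) (hGu : ∀ x ∈ U, IsUnit (G x))
    (hK : ∀ α, IsKillingTensorOn U G (K α))
    (hdiag : ∀ᵐ x ∂μ, x ∈ U → ∃ B : Matrix ι ι ℝ, IsUnit B ∧ ∀ α, (B * K α x * Bᵀ).IsDiag)
    (hind : LinearIndependent ℝ fun α => U.domRestrict (K α)) :
    ∀ᵐ x ∂μ, x ∈ U → LinearIndependent ℝ fun α => K α x := by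
  have hspan (s : Finset κ) (β : κ) (hβ : β ∉ s) : ∀ᵐ x ∂μ, x ∈ U →
      LinearIndependent ℝ (fun α : s => K α x) →
        K β x ∉ Submodule.span ℝ (Set.range fun α : s => K α x) := by
    refine ae_notMem_span μ hU hUc hG hGs hGu (fun α => hK α) (hK β)
      (hdiag.mono fun x hx hxU => (hx hxU).imp fun B hB => ⟨hB.1, fun α => hB.2 α⟩) fun a => ?_
    by_contra! h
    refine hind.notMem_span_image (s := (s : Set κ)) hβ ?_
    rw [Set.image_eq_range]
    exact (Submodule.mem_span_range_iff_exists_fun ℝ).2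
      ⟨a, funext fun y => (Finset.sum_apply _ _ _).trans (h y y.2).symm⟩
  filter_upwards [ae_all_iff.2 fun s => ae_all_iff.2 fun β =>
    eventually_imp_distrib_left.2 (hspan s β)] with x hx hxU
  classical
  obtain ⟨b, -, -, hb, hbind⟩ := exists_linearIndepOn_extension (K := ℝ) (v := fun α => K α x)
    (s := ∅) (t := Set.univ) (linearIndepOn_empty _ _) (Set.empty_subset _)
  lift b to Finset κ using b.toFinite
  suffices hbu : (b : Set κ) = Set.univ from linearIndepOn_univ_iff.1 (hbu ▸ hbind)
  refine Set.eq_univ_of_forall fun β => by_contra fun hβ => hx b β hβ hxU hbind ?_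
  have h := hb ⟨β, trivial, rfl⟩
  rwa [Set.image_eq_range] at h

end KillingSpan

section InverseFunction

variable {E F : Type*} [NormedAddCommGroup E] [NormedSpace ℝ E] [NormedAddCommGroup F]
  [NormedSpace ℝ F]

theorem exists_openPartialHomeomorph_contDiffOn_symm [CompleteSpace E] {f : E → F} {O : Set E}
    {a : E} (hO : IsOpen O) (hf : ContDiffOn ℝ ∞ f O) (ha : a ∈ O)
    (hf' : (fderiv ℝ f a).IsInvertible) :
    ∃ e : OpenPartialHomeomorph E F, a ∈ e.source ∧ e.source ⊆ O ∧ ⇑e = f ∧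
      ContDiffOn ℝ ∞ e.symm e.target := by
  have hfO {z} (hz : z ∈ O) : ContDiffAt ℝ ∞ f z := hf.contDiffAt (hO.mem_nhds hz)
  have hder {z} (hz : z ∈ O) : HasFDerivAt f (fderiv ℝ f z) z :=
    (differentiableAt_of_contDiffOn hf hO hz).hasFDerivAt
  obtain ⟨f₀, hf₀⟩ := hf'
  have hfa : HasFDerivAt f (f₀ : E →L[ℝ] F) a := hf₀ ▸ hder ha
  let O' := O ∩ fderiv ℝ f ⁻¹' Set.range ((↑) : (E ≃L[ℝ] F) → E →L[ℝ] F)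
  have hf'O : ContinuousOn (fderiv ℝ f) O := (hf.fderiv_of_isOpen (m := ∞) hO le_rfl).continuousOn
  have hO' : IsOpen O' := hf'O.isOpen_inter_preimage hO ContinuousLinearEquiv.isOpen
  let e := ((hfO ha).toOpenPartialHomeomorph f hfa (by simp)).restrOpen O' hO'
  have hsource : e.source ⊆ O' := Set.inter_subset_right
  refine ⟨e, ⟨(hfO ha).mem_toOpenPartialHomeomorph_source hfa (by simp), ha, f₀, hf₀⟩,
    hsource.trans Set.inter_subset_left, rfl, fun y hy => ?_⟩
  obtain ⟨hyO, f₁, hf₁⟩ := hsource (e.map_target hy)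
  have hfy : HasFDerivAt e (f₁ : E →L[ℝ] F) (e.symm y) := hf₁ ▸ hder hyO
  exact (e.contDiffAt_symm hy hfy (hfO hyO)).contDiffWithinAt

theorem isInvertible_of_injective [FiniteDimensional ℝ E] {A : E →L[ℝ] E}
    (hA : Function.Injective A) : A.IsInvertible :=
  ⟨(LinearEquiv.ofInjectiveEndo (A : E →ₗ[ℝ] E) hA).toContinuousLinearEquiv, rfl⟩

end InverseFunction

section SmoothEigenvectors

variable {E F : Type*} [NormedAddCommGroup E] [NormedSpace ℝ E] [NormedAddCommGroup F]
  [NormedSpace ℝ F] {U : Set E} {x₀ : E} {ℓ : F →L[ℝ] ℝ} {v₀ : F} {lam₀ : ℝ}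

theorem eq_zero_of_simple_eigenvector {A : F →L[ℝ] F} {η : F} {μ : ℝ}
    (hℓ : ∀ w, ℓ (A w) = lam₀ * ℓ w) (hℓv₀ : ℓ v₀ ≠ 0)
    (hsimple : ∀ w, A w = lam₀ • w → ℓ w = 0 → w = 0) (hη : A η = lam₀ • η + μ • v₀)
    (hℓη : ℓ η = 0) : η = 0 ∧ μ = 0 := by
  have hμ : μ = 0 := by simpa [hη, hℓη, hℓv₀] using hℓ η
  exact ⟨hsimple η (by simpa [hμ] using hη) hℓη, hμ⟩

/-- The map `(x, v, lam) ↦ (x, T x v - lam v, ℓ v)`. Its inverse continues an eigenpair of `T`,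
with the eigenvector normalised by `ℓ`, to nearby parameters. -/
def eigenpairMap (T : E → F →L[ℝ] F) (ℓ : F →L[ℝ] ℝ) (z : E × F × ℝ) : E × F × ℝ :=
  (z.1, T z.1 z.2.1 - z.2.2 • z.2.1, ℓ z.2.1)

theorem contDiffOn_eigenpairMap {T : E → F →L[ℝ] F} (hT : ContDiffOn ℝ ∞ T U) :
    ContDiffOn ℝ ∞ (eigenpairMap T ℓ) (Prod.fst ⁻¹' U) := by
  have hTO : ContDiffOn ℝ ∞ (fun z : E × F × ℝ => T z.1) (Prod.fst ⁻¹' U) :=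
    hT.comp contDiff_fst.contDiffOn fun _ hz => hz
  exact contDiff_fst.contDiffOn.prodMk (((hTO.clm_apply contDiff_snd.fst.contDiffOn).sub
    (contDiff_snd.snd.contDiffOn.smul contDiff_snd.fst.contDiffOn)).prodMk
      (ℓ.contDiff.comp_contDiffOn contDiff_snd.fst.contDiffOn))

theorem injective_fderiv_eigenpairMap {T : E → F →L[ℝ] F} (hT : DifferentiableAt ℝ T x₀)
    (hℓ : ∀ w, ℓ (T x₀ w) = lam₀ * ℓ w) (hℓv₀ : ℓ v₀ ≠ 0)
    (hsimple : ∀ w, T x₀ w = lam₀ • w → ℓ w = 0 → w = 0) :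
    Function.Injective (fderiv ℝ (eigenpairMap T ℓ) (x₀, v₀, lam₀)) := by
  let z₀ : E × F × ℝ := (x₀, v₀, lam₀)
  have hv : HasFDerivAt (fun z : E × F × ℝ => z.2.1) _ z₀ :=
    ((ContinuousLinearMap.fst ℝ F ℝ).comp (ContinuousLinearMap.snd ℝ E (F × ℝ))).hasFDerivAt
  have hlam : HasFDerivAt (fun z : E × F × ℝ => z.2.2) _ z₀ :=
    ((ContinuousLinearMap.snd ℝ F ℝ).comp (ContinuousLinearMap.snd ℝ E (F × ℝ))).hasFDerivAt
  have hT' := hT.hasFDerivAt.comp z₀ (f := Prod.fst) hasFDerivAt_fst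
  have hmap : HasFDerivAt (eigenpairMap T ℓ) _ z₀ := hasFDerivAt_fst.prodMk
    (((hT'.clm_apply hv).sub (hlam.smul hv)).prodMk (ℓ.hasFDerivAt.comp z₀ hv))
  refine (injective_iff_map_eq_zero _).2 fun ⟨ξ, η, μ⟩ h => ?_
  rw [hmap.fderiv] at h
  obtain ⟨rfl, hη, hℓη⟩ : ξ = 0 ∧ T x₀ η + fderiv ℝ T x₀ ξ v₀ - (lam₀ • η + μ • v₀) = 0 ∧
    ℓ η = 0 := by simpa [z₀] using h
  obtain ⟨rfl, rfl⟩ := eq_zero_of_simple_eigenvector hℓ hℓv₀ hsimple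
    (by simpa [sub_eq_zero] using hη) hℓη
  rfl

theorem exists_smooth_eigenvector [FiniteDimensional ℝ E] [FiniteDimensional ℝ F]
    {T : E → F →L[ℝ] F} (hU : IsOpen U) (hT : ContDiffOn ℝ ∞ T U) (hx₀ : x₀ ∈ U)
    (hv₀ : T x₀ v₀ = lam₀ • v₀) (hℓ : ∀ w, ℓ (T x₀ w) = lam₀ * ℓ w) (hℓv₀ : ℓ v₀ ≠ 0)
    (hsimple : ∀ w, T x₀ w = lam₀ • w → ℓ w = 0 → w = 0) :
    ∃ V ⊆ U, IsOpen V ∧ x₀ ∈ V ∧ ∃ (v : E → F) (lam : E → ℝ), ContDiffOn ℝ ∞ v V ∧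
      ContDiffOn ℝ ∞ lam V ∧ v x₀ = v₀ ∧ lam x₀ = lam₀ ∧ ∀ x ∈ V, T x (v x) = lam x • v x := by
  obtain ⟨e, ha, heU, he, hsymm⟩ := exists_openPartialHomeomorph_contDiffOn_symm
    (hU.preimage continuous_fst) (contDiffOn_eigenpairMap (ℓ := ℓ) hT) (a := (x₀, v₀, lam₀)) hx₀
    (isInvertible_of_injective (injective_fderiv_eigenpairMap
      (differentiableAt_of_contDiffOn hT hU hx₀) hℓ hℓv₀ hsimple))
  let j (x : E) : E × F × ℝ := (x, 0, ℓ v₀)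
  have hj : ContDiff ℝ ∞ j := contDiff_id.prodMk contDiff_const
  have hej : e (x₀, v₀, lam₀) = j x₀ := by simp [he, eigenpairMap, hv₀, j]
  let V := j ⁻¹' e.target
  let z (x : E) := e.symm (j x)
  have hz₀ : z x₀ = (x₀, v₀, lam₀) := by rw [← e.left_inv ha, hej]
  have hsol {x} (hx : x ∈ V) : eigenpairMap T ℓ (z x) = j x := by rw [← he]; exact e.right_inv hx
  have hfst {x} (hx : x ∈ V) : (z x).1 = x := congrArg Prod.fst (hsol hx)
  have hz : ContDiffOn ℝ ∞ z V := hsymm.comp hj.contDiffOn fun _ hx => hx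
  refine ⟨V, fun x hx => hfst hx ▸ heU (e.map_target hx), e.open_target.preimage hj.continuous,
    Set.mem_preimage.2 (hej ▸ e.map_source ha), fun x => (z x).2.1, fun x => (z x).2.2, hz.snd.fst,
    hz.snd.snd,
    by simp only [hz₀], by simp only [hz₀], fun x hx => ?_⟩
  have h : T (z x).1 (z x).2.1 - (z x).2.2 • (z x).2.1 = 0 := congrArg (fun y => y.2.1) (hsol hx)
  rwa [hfst hx, sub_eq_zero] at h

end SmoothEigenvectors

section SimultaneousDiagonalization

variable {ι 𝕜 : Type*} [Fintype ι] [DecidableEq ι] [Field 𝕜] {A B G K M P : Matrix ι ι 𝕜}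
  {lam : ι → 𝕜}

theorem isDiag_of_commute_diagonal (hlam : Function.Injective lam)
    (h : Commute A (diagonal lam)) : A.IsDiag := by
  intro i j hij
  have hA : A i j * lam j = lam i * A i j := by
    simpa only [mul_diagonal, diagonal_mul] using congrFun (congrFun h.eq i) j
  refine (mul_eq_zero.1 ?_).resolve_left (sub_ne_zero.2 (hlam.ne hij))
  rw [sub_mul, ← hA, mul_comm, sub_self]

theorem inv_mul_mul_transpose (hB : IsUnit B) (G K : Matrix ι ι 𝕜) :
    (B * G * Bᵀ)⁻¹ * (B * K * Bᵀ) = Bᵀ⁻¹ * (G⁻¹ * K) * Bᵀ := by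
  rw [Matrix.mul_inv_rev, Matrix.mul_inv_rev]
  simp only [Matrix.mul_assoc]
  rw [nonsing_inv_mul_cancel_left _ _ ((isUnit_iff_isUnit_det B).1 hB)]

theorem commute_inv_mul_of_isDiag (hB : IsUnit B) (hG : (B * G * Bᵀ).IsDiag)
    (hK : (B * K * Bᵀ).IsDiag) (hM : (B * M * Bᵀ).IsDiag) : Commute (G⁻¹ * K) (G⁻¹ * M) := by
  have hBt : IsUnit Bᵀ.det := (isUnit_iff_isUnit_det _).1 ((isUnit_transpose B).2 hB)
  have hconj {L : Matrix ι ι 𝕜} (hL : (B * L * Bᵀ).IsDiag) :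
      ∃ d : ι → 𝕜, G⁻¹ * L = Bᵀ * diagonal d * Bᵀ⁻¹ := by
    refine ⟨Ring.inverse (diag (B * G * Bᵀ)) * diag (B * L * Bᵀ), ?_⟩
    have h : diagonal (Ring.inverse (diag (B * G * Bᵀ)) * diag (B * L * Bᵀ)) =
        Bᵀ⁻¹ * (G⁻¹ * L) * Bᵀ := by
      rw [← inv_mul_mul_transpose hB, ← hG.diagonal_diag, ← hL.diagonal_diag, inv_diagonal,
        diagonal_mul_diagonal]
      simp only [diag_diagonal, Pi.mul_def]
    rw [h, ← Matrix.mul_assoc, mul_nonsing_inv_cancel_left _ _ hBt,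
      mul_nonsing_inv_cancel_right _ _ hBt]
  obtain ⟨d, hd⟩ := hconj hK
  obtain ⟨e, he⟩ := hconj hM
  have hmul (d e : ι → 𝕜) : Bᵀ * diagonal d * Bᵀ⁻¹ * (Bᵀ * diagonal e * Bᵀ⁻¹) =
      Bᵀ * (diagonal d * diagonal e) * Bᵀ⁻¹ := by
    simp only [Matrix.mul_assoc, nonsing_inv_mul_cancel_left _ _ hBt]
  rw [hd, he, commute_iff_eq, hmul, hmul, (commute_diagonal d e).eq]

theorem isDiag_transpose_mul_mul (hlam : Function.Injective lam) (hG : IsUnit G)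
    (hGs : G.IsSymm) (hMs : M.IsSymm) (hP : IsUnit P) (hGM : G⁻¹ * M * P = P * diagonal lam)
    (hKM : Commute (G⁻¹ * K) (G⁻¹ * M)) : (Pᵀ * K * P).IsDiag := by
  have hGd := (isUnit_iff_isUnit_det G).1 hG
  have hPd := (isUnit_iff_isUnit_det P).1 hP
  have hMP : Pᵀ * M * P = Pᵀ * G * P * diagonal lam := by
    rw [Matrix.mul_assoc _ P, ← hGM]
    simp only [Matrix.mul_assoc, mul_nonsing_inv_cancel_left _ _ hGd]
  have hsymm {L : Matrix ι ι 𝕜} (hL : L.IsSymm) : (Pᵀ * L * P)ᵀ = Pᵀ * L * P := by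
    rw [transpose_mul, transpose_mul, transpose_transpose, hL.eq, Matrix.mul_assoc]
  have hGdiag : (Pᵀ * G * P).IsDiag := by
    refine isDiag_of_commute_diagonal hlam ?_
    have h := congrArg transpose hMP
    rw [transpose_mul _ (diagonal lam), diagonal_transpose, hsymm hGs, hsymm hMs, hMP] at h
    exact h
  have hKdiag : (P⁻¹ * (G⁻¹ * K) * P).IsDiag := by
    refine isDiag_of_commute_diagonal hlam ?_
    have hlamP : diagonal lam = P⁻¹ * (G⁻¹ * M) * P := by
      rw [Matrix.mul_assoc, hGM, nonsing_inv_mul_cancel_left _ _ hPd]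
    have hmul (X Y : Matrix ι ι 𝕜) : P⁻¹ * X * P * (P⁻¹ * Y * P) = P⁻¹ * (X * Y) * P := by
      simp only [Matrix.mul_assoc, mul_nonsing_inv_cancel_left _ _ hPd]
    rw [hlamP, commute_iff_eq, hmul, hmul, hKM.eq]
  have hK : Pᵀ * K * P = Pᵀ * G * P * (P⁻¹ * (G⁻¹ * K) * P) := by
    simp only [Matrix.mul_assoc, mul_nonsing_inv_cancel_left _ _ hPd,
      mul_nonsing_inv_cancel_left _ _ hGd]
  rw [hK, ← hGdiag.diagonal_diag, ← hKdiag.diagonal_diag, diagonal_mul_diagonal]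
  exact isDiag_diagonal _

theorem isUnit_diag_of_linearIndependent {K : ι → Matrix ι ι 𝕜} (hB : IsUnit B)
    (hdiag : ∀ α, (B * K α * Bᵀ).IsDiag) (hind : LinearIndependent 𝕜 K) :
    IsUnit (of fun α => diag (B * K α * Bᵀ)) := by
  let f : Matrix ι ι 𝕜 →ₗ[𝕜] Matrix ι ι 𝕜 := LinearMap.mulRight 𝕜 Bᵀ ∘ₗ LinearMap.mulLeft 𝕜 B
  have hf : Function.Injective f := fun X Y h =>
    hB.mul_left_cancel (((isUnit_transpose B).2 hB).mul_right_cancel h)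
  rw [← linearIndependent_rows_iff_isUnit]
  refine LinearIndependent.of_comp (diagonalLinearMap ι 𝕜 𝕜) ?_
  have hrow : diagonalLinearMap ι 𝕜 𝕜 ∘ row (of fun α => diag (B * K α * Bᵀ)) = f ∘ K :=
    funext fun α => (hdiag α).diagonal_diag
  exact hrow ▸ hind.map' f (LinearMap.ker_eq_bot.2 hf)

theorem exists_sum_smul_eq_mul_diagonal {K : ι → Matrix ι ι 𝕜} (hB : IsUnit B)
    (hdiag : ∀ α, (B * K α * Bᵀ).IsDiag) (hind : LinearIndependent 𝕜 K)
    (hG : (B * G * Bᵀ).IsDiag) (lam : ι → 𝕜) :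
    ∃ a : ι → 𝕜, (∑ α, a α • K α) * Bᵀ = G * Bᵀ * diagonal lam := by
  let d : Matrix ι ι 𝕜 := of fun α => diag (B * K α * Bᵀ)
  have hd : IsUnit d.det :=
    (isUnit_iff_isUnit_det d).1 (isUnit_diag_of_linearIndependent hB hdiag hind)
  let a := (diag (B * G * Bᵀ) * lam) ᵥ* d⁻¹
  have had : a ᵥ* d = diag (B * G * Bᵀ) * lam := by
    rw [vecMul_vecMul, nonsing_inv_mul _ hd, vecMul_one]
  refine ⟨a, hB.mul_left_cancel ?_⟩
  calc B * ((∑ α, a α • K α) * Bᵀ) = ∑ α, a α • (B * K α * Bᵀ) := by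
        simp only [Finset.sum_mul, Finset.mul_sum, smul_mul, Matrix.mul_smul, Matrix.mul_assoc]
    _ = diagonal (a ᵥ* d) := by
        rw [vecMul_eq_sum]
        refine .trans (Finset.sum_congr rfl fun α _ => ?_)
          (map_sum (diagonalLinearMap ι 𝕜 𝕜) _ _).symm
        rw [map_smul]
        exact congrArg _ (hdiag α).diagonal_diag.symm
    _ = B * G * Bᵀ * diagonal lam := by
        rw [had, ← hG.diagonal_diag, diag_diagonal, diagonal_mul_diagonal]
        rfl
    _ = B * (G * Bᵀ * diagonal lam) := by simp only [Matrix.mul_assoc]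

end SimultaneousDiagonalization

section DiagonalizingFrames

theorem eventually_injective {ι X : Type*} [Finite ι] [TopologicalSpace X] {lam : ι → X → ℝ}
    {x₀ : X} (hlam : ∀ i, ContinuousAt (lam i) x₀) (hinj : Function.Injective fun i => lam i x₀) :
    ∀ᶠ x in 𝓝 x₀, Function.Injective fun i => lam i x := by
  simp only [Function.injective_iff_pairwise_ne, Pairwise, Function.onFun]
  refine eventually_all.2 fun i => eventually_all.2 fun j =>
    eventually_imp_distrib_left.2 fun hij => ?_
  exact (((hlam i).sub (hlam j)).eventually_ne (sub_ne_zero.2 (hinj.ne hij))).mono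
    fun x => sub_ne_zero.1

variable {ι E : Type*} [Fintype ι] [DecidableEq ι] [NormedAddCommGroup E] [NormedSpace ℝ E]
  {U : Set E} {x₀ : E}

theorem exists_isOpen_isUnit_and {A : E → Matrix ι ι ℝ} {p : E → Prop} (hU : IsOpen U)
    (hA : ContDiffOn ℝ ∞ A U) (hx₀ : x₀ ∈ U) (hAx₀ : IsUnit (A x₀)) (hp : ∀ᶠ x in 𝓝 x₀, p x) :
    ∃ V ⊆ U, IsOpen V ∧ x₀ ∈ V ∧ ∀ x ∈ V, IsUnit (A x) ∧ p x := by
  have hAu : ∀ᶠ x in 𝓝 x₀, IsUnit (A x) :=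
    (hA.continuousOn.continuousAt (hU.mem_nhds hx₀)).eventually (Units.isOpen.mem_nhds hAx₀)
  obtain ⟨V, hV, hVo, hxV⟩ := eventually_nhds_iff.1 ((hU.eventually_mem hx₀).and (hAu.and hp))
  exact ⟨V, fun x hx => (hV x hx).1, hVo, hxV, fun x hx => (hV x hx).2⟩

theorem exists_smooth_eigencolumn [FiniteDimensional ℝ E] {T : E → Matrix ι ι ℝ}
    {P₀ : Matrix ι ι ℝ} {lam₀ : ι → ℝ} (hU : IsOpen U) (hT : ContDiffOn ℝ ∞ T U) (hx₀ : x₀ ∈ U)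
    (hP₀ : IsUnit P₀) (hlam₀ : Function.Injective lam₀) (h₀ : T x₀ * P₀ = P₀ * diagonal lam₀)
    (i : ι) : ∃ V ⊆ U, IsOpen V ∧ x₀ ∈ V ∧ ∃ (v : E → ι → ℝ) (lam : E → ℝ), ContDiffOn ℝ ∞ v V ∧
      ContDiffOn ℝ ∞ lam V ∧ v x₀ = P₀.col i ∧ lam x₀ = lam₀ i ∧
      ∀ x ∈ V, T x *ᵥ v x = lam x • v x := by
  have hdet := (isUnit_iff_isUnit_det P₀).1 hP₀
  have hTP : P₀⁻¹ * T x₀ = diagonal lam₀ * P₀⁻¹ := by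
    rw [← mul_nonsing_inv_cancel_right P₀ (P₀⁻¹ * T x₀) hdet, Matrix.mul_assoc P₀⁻¹, h₀,
      nonsing_inv_mul_cancel_left _ _ hdet]
  have hcoord (w : ι → ℝ) (k : ι) : (P₀⁻¹ *ᵥ T x₀ *ᵥ w) k = lam₀ k * (P₀⁻¹ *ᵥ w) k := by
    rw [mulVec_mulVec, hTP, ← mulVec_mulVec, mulVec_diagonal]
  refine exists_smooth_eigenvector (T := fun x => mulVecCLM ι (T x))
    (ℓ := (ContinuousLinearMap.proj i).comp (mulVecCLM ι P₀⁻¹)) hU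
    ((mulVecCLM ι).contDiff.comp_contDiffOn hT) hx₀ ?_ (fun w => hcoord w i) ?_
    fun w (hw : T x₀ *ᵥ w = lam₀ i • w) (hwi : (P₀⁻¹ *ᵥ w) i = 0) => ?_
  · rw [← mulVec_single_one]
    change T x₀ *ᵥ P₀ *ᵥ Pi.single i 1 = _
    rw [mulVec_mulVec, h₀, ← mulVec_mulVec, diagonal_mulVec_single, mul_one, ← mulVec_smul,
      ← Pi.single_smul', smul_eq_mul, mul_one]
  · change (P₀⁻¹ *ᵥ P₀.col i) i ≠ 0
    rw [← mulVec_single_one, mulVec_mulVec, nonsing_inv_mul _ hdet, one_mulVec, Pi.single_eq_same]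
    exact one_ne_zero
  · have hzero : P₀⁻¹ *ᵥ w = 0 := funext fun k => by
      obtain rfl | hki := eq_or_ne k i
      · exact hwi
      have h := hcoord w k
      rw [hw, mulVec_smul, Pi.smul_apply, smul_eq_mul] at h
      exact (mul_eq_mul_right_iff.1 h).resolve_left (hlam₀.ne hki.symm)
    rw [← one_mulVec w, ← mul_nonsing_inv P₀ hdet, ← mulVec_mulVec, hzero, mulVec_zero]

theorem exists_smooth_eigenbasis [FiniteDimensional ℝ E] {T : E → Matrix ι ι ℝ}
    {P₀ : Matrix ι ι ℝ} {lam₀ : ι → ℝ} (hU : IsOpen U) (hT : ContDiffOn ℝ ∞ T U) (hx₀ : x₀ ∈ U)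
    (hP₀ : IsUnit P₀) (hlam₀ : Function.Injective lam₀) (h₀ : T x₀ * P₀ = P₀ * diagonal lam₀) :
    ∃ V ⊆ U, IsOpen V ∧ x₀ ∈ V ∧ ∃ (P : E → Matrix ι ι ℝ) (lam : E → ι → ℝ), ContDiffOn ℝ ∞ P V ∧
      ∀ x ∈ V, IsUnit (P x) ∧ Function.Injective (lam x) ∧ T x * P x = P x * diagonal (lam x) := by
  choose V _ hVo hxV v lam hv hlam hvx₀ hlamx₀ heig using
    exists_smooth_eigencolumn hU hT hx₀ hP₀ hlam₀ h₀
  let V' := U ∩ ⋂ i, V i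
  have hV'V (i : ι) : V' ⊆ V i := Set.inter_subset_right.trans (Set.iInter_subset V i)
  let P (x : E) : Matrix ι ι ℝ := of fun k i => v i x k
  have hP : ContDiffOn ℝ ∞ P V' := contDiffOn_matrix.2 fun k i =>
    (contDiffOn_pi.1 (hv i) k).mono (hV'V i)
  have hPx₀ : P x₀ = P₀ := Matrix.ext fun k i => congrFun (hvx₀ i) k
  obtain ⟨W, hWV, hWo, hxW, hW⟩ := exists_isOpen_isUnit_and (hU.inter (isOpen_iInter_of_finite hVo))
    hP ⟨hx₀, Set.mem_iInter.2 hxV⟩ (hPx₀ ▸ hP₀) (eventually_injective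
      (fun i => (hlam i).continuousOn.continuousAt ((hVo i).mem_nhds (hxV i)))
      (by simpa only [hlamx₀] using hlam₀))
  refine ⟨W, hWV.trans Set.inter_subset_left, hWo, hxW, P, fun x i => lam i x, hP.mono hWV,
    fun x hx => ⟨(hW x hx).1, (hW x hx).2, ?_⟩⟩
  ext k i
  rw [mul_diagonal, mul_comm]
  exact congrFun (heig i x (hV'V i (hWV hx))) k

end DiagonalizingFrames

section StackelFrames

variable {ι E : Type*} [Fintype ι] [DecidableEq ι] [NormedAddCommGroup E] [NormedSpace ℝ E]
  {U V : Set E} {K : ι → E → Matrix ι ι ℝ} {B S : E → Matrix ι ι ℝ} {x₀ : E} {o : ι}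

/-- The rows of `B` form a smooth coframe on `V` which diagonalises all quadratic forms `K α`, and
the diagonal entries are those of the inverse of `S`. In coordinates with Jacobian `B` this is the
Stäckel form of the `K α`; that the rows of `S` are functions of one coordinate each is not part
of the definition. -/
structure IsStackelFrameOn (V : Set E) (K : ι → E → Matrix ι ι ℝ) (B S : E → Matrix ι ι ℝ) :
    Prop where
  contDiffOn_coframe : ContDiffOn ℝ ∞ B V
  contDiffOn_stackel : ContDiffOn ℝ ∞ S V
  isUnit_coframe : ∀ x ∈ V, IsUnit (B x)
  isUnit_stackel : ∀ x ∈ V, IsUnit (S x)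
  mul_mul_transpose : ∀ α, ∀ x ∈ V, B x * K α x * (B x)ᵀ = diagonal ((S x)⁻¹ α)

theorem commute_inv_mul_of_ae_isDiag [MeasurableSpace E] [OpensMeasurableSpace E] {μ : Measure E}
    [μ.IsOpenPosMeasure] (hU : IsOpen U) (hK : ∀ α, ContDiffOn ℝ ∞ (K α) U)
    (hG : ∀ x ∈ U, IsUnit (K o x))
    (hdiag : ∀ᵐ x ∂μ, x ∈ U → ∃ B : Matrix ι ι ℝ, IsUnit B ∧ ∀ α, (B * K α x * Bᵀ).IsDiag)
    (α β : ι) {x : E} (hx : x ∈ U) :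
    Commute ((K o x)⁻¹ * K α x) ((K o x)⁻¹ * K β x) := by
  have hcont (γ : ι) : ContinuousOn (fun x => (K o x)⁻¹ * K γ x) U :=
    ((contDiffOn_matrix_inv (hK o) hG).mul (hK γ)).continuousOn
  refine Measure.eqOn_open_of_ae_eq (μ := μ) ?_ hU ((hcont α).mul (hcont β))
    ((hcont β).mul (hcont α)) hx
  filter_upwards [ae_restrict_of_ae hdiag, ae_restrict_mem hU.measurableSet] with y hy hyU
  obtain ⟨B, hB, hBd⟩ := hy hyU
  exact commute_inv_mul_of_isDiag hB (hBd o) (hBd α) (hBd β)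

theorem exists_smooth_simultaneous_diagonalization [FiniteDimensional ℝ E] (hU : IsOpen U)
    (hK : ∀ α, ContDiffOn ℝ ∞ (K α) U) (hKs : ∀ α, ∀ x ∈ U, (K α x).IsSymm)
    (hG : ∀ x ∈ U, IsUnit (K o x))
    (hcomm : ∀ α β, ∀ x ∈ U, Commute ((K o x)⁻¹ * K α x) ((K o x)⁻¹ * K β x))
    (hx₀ : x₀ ∈ U) (hind : LinearIndependent ℝ fun α => K α x₀) {B₀ : Matrix ι ι ℝ}
    (hB₀ : IsUnit B₀) (hdiag : ∀ α, (B₀ * K α x₀ * B₀ᵀ).IsDiag) :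
    ∃ V ⊆ U, IsOpen V ∧ x₀ ∈ V ∧ ∃ B : E → Matrix ι ι ℝ, ContDiffOn ℝ ∞ B V ∧
      ∀ x ∈ V, IsUnit (B x) ∧ ∀ α, (B x * K α x * (B x)ᵀ).IsDiag := by
  let lam₀ (i : ι) : ℝ := (Fintype.equivFin ι i : ℕ)
  have hlam₀ : Function.Injective lam₀ := fun i j h =>
    (Fintype.equivFin ι).injective (Fin.ext (Nat.cast_injective h))
  obtain ⟨a, ha⟩ := exists_sum_smul_eq_mul_diagonal hB₀ hdiag hind (hdiag o) lam₀
  let M (x : E) : Matrix ι ι ℝ := ∑ α, a α • K α x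
  have hM : ContDiffOn ℝ ∞ M U := .sum fun α _ => (hK α).const_smul (a α)
  have hMs {x : E} (hx : x ∈ U) : (M x).IsSymm := by
    simp only [M, Matrix.IsSymm, transpose_sum, transpose_smul, (hKs _ x hx).eq]
  have hMcomm (α : ι) {x : E} (hx : x ∈ U) :
      Commute ((K o x)⁻¹ * K α x) ((K o x)⁻¹ * M x) := by
    simp only [M, Finset.mul_sum, Matrix.mul_smul]
    exact Commute.sum_right _ _ _ fun β _ => (hcomm α β x hx).smul_right (a β)
  obtain ⟨V, hVU, hV, hxV, P, lam, hP, h⟩ := exists_smooth_eigenbasis hU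
    ((contDiffOn_matrix_inv (hK o) hG).mul hM) hx₀ ((isUnit_transpose B₀).2 hB₀) hlam₀ (by
      rw [Matrix.mul_assoc, ha, Matrix.mul_assoc,
        nonsing_inv_mul_cancel_left _ _ ((isUnit_iff_isUnit_det _).1 (hG x₀ hx₀))])
  refine ⟨V, hVU, hV, hxV, fun x => (P x)ᵀ, contDiffOn_matrix_transpose hP, fun x hx => ?_⟩
  obtain ⟨hPx, hlam, hMP⟩ := h x hx
  refine ⟨(isUnit_transpose _).2 hPx, fun α => ?_⟩
  rw [transpose_transpose]
  exact isDiag_transpose_mul_mul hlam (hG x (hVU hx)) (hKs o x (hVU hx)) (hMs (hVU hx)) hPx hMP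
    (hMcomm α (hVU hx))

theorem exists_isStackelFrameOn [FiniteDimensional ℝ E] (hU : IsOpen U)
    (hK : ∀ α, ContDiffOn ℝ ∞ (K α) U) (hKs : ∀ α, ∀ x ∈ U, (K α x).IsSymm)
    (hG : ∀ x ∈ U, IsUnit (K o x))
    (hcomm : ∀ α β, ∀ x ∈ U, Commute ((K o x)⁻¹ * K α x) ((K o x)⁻¹ * K β x))
    (hx₀ : x₀ ∈ U) (hind : LinearIndependent ℝ fun α => K α x₀)
    (hdiag : ∃ B : Matrix ι ι ℝ, IsUnit B ∧ ∀ α, (B * K α x₀ * Bᵀ).IsDiag) :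
    ∃ V ⊆ U, IsOpen V ∧ x₀ ∈ V ∧ ∃ B S, IsStackelFrameOn V K B S := by
  obtain ⟨B₀, hB₀, hBd₀⟩ := hdiag
  obtain ⟨V, hVU, hV, hxV, B, hB, hBd⟩ :=
    exists_smooth_simultaneous_diagonalization hU hK hKs hG hcomm hx₀ hind hB₀ hBd₀
  let d (x : E) : Matrix ι ι ℝ := of fun α => diag (B x * K α x * (B x)ᵀ)
  have hd : ContDiffOn ℝ ∞ d V := contDiffOn_matrix.2 fun α i => contDiffOn_matrix.1
    ((hB.mul ((hK α).mono hVU)).mul (contDiffOn_matrix_transpose hB)) i i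
  have hdx₀ : IsUnit (d x₀) :=
    isUnit_diag_of_linearIndependent (hBd x₀ hxV).1 (hBd x₀ hxV).2 hind
  obtain ⟨W, hWV, hW, hxW, hdW⟩ :=
    exists_isOpen_isUnit_and hV hd hxV hdx₀ (Eventually.of_forall fun _ => trivial)
  refine ⟨W, hWV.trans hVU, hW, hxW, B, fun x => (d x)⁻¹, hB.mono hWV,
    contDiffOn_matrix_inv (hd.mono hWV) fun x hx => (hdW x hx).1, fun x hx => (hBd x (hWV hx)).1,
    fun x hx => isUnit_nonsing_inv_iff.2 (hdW x hx).1, fun α x hx => ?_⟩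
  rw [nonsing_inv_nonsing_inv _ ((isUnit_iff_isUnit_det _).1 (hdW x hx).1)]
  exact ((hBd x (hWV hx)).2 α).diagonal_diag.symm

theorem IsStackelFrameOn.scale (h : IsStackelFrameOn V K B S) {W : Set E} (hWV : W ⊆ V)
    {t : E → ι → ℝ} (ht : ContDiffOn ℝ ∞ t W) (hpos : ∀ x ∈ W, ∀ i, 0 < t x i) :
    IsStackelFrameOn W K (fun x => diagonal (fun i => √(t x i)) * B x)
      (fun x => diagonal (t x)⁻¹ * S x) := by
  have hunit {r : ι → ℝ} (hr : ∀ i, r i ≠ 0) : IsUnit (diagonal r) :=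
    isUnit_diagonal.2 (Pi.isUnit_iff.2 fun i => (hr i).isUnit)
  have hsmooth {r : E → ι → ℝ} (hr : ∀ i, ContDiffOn ℝ ∞ (fun x => r x i) W) :
      ContDiffOn ℝ ∞ (fun x => diagonal (r x)) W :=
    (diagonalLinearMap ι ℝ ℝ).toContinuousLinearMap.contDiff.comp_contDiffOn (contDiffOn_pi.2 hr)
  have ht' := contDiffOn_pi.1 ht
  refine ⟨(hsmooth fun i => (ht' i).sqrt fun x hx => (hpos x hx i).ne').mul
      (h.contDiffOn_coframe.mono hWV),
    (hsmooth fun i => (ht' i).inv fun x hx => (hpos x hx i).ne').mul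
      (h.contDiffOn_stackel.mono hWV),
    fun x hx => (hunit fun i => (Real.sqrt_pos.2 (hpos x hx i)).ne').mul
      (h.isUnit_coframe x (hWV hx)),
    fun x hx => (hunit fun i => inv_ne_zero (hpos x hx i).ne').mul (h.isUnit_stackel x (hWV hx)),
    fun α x hx => ?_⟩
  have hinv : (diagonal (t x)⁻¹)⁻¹ = diagonal (t x) := by
    refine inv_eq_left_inv ?_
    rw [diagonal_mul_diagonal, ← diagonal_one]
    exact congrArg diagonal (funext fun i => mul_inv_cancel₀ (hpos x hx i).ne')
  calc diagonal (fun i => √(t x i)) * B x * K α x * (diagonal (fun i => √(t x i)) * B x)ᵀ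
      = diagonal (fun i => √(t x i)) * (B x * K α x * (B x)ᵀ) *
          diagonal (fun i => √(t x i)) := by
        rw [transpose_mul, diagonal_transpose]
        simp only [Matrix.mul_assoc]
    _ = diagonal fun i => (S x)⁻¹ α i * t x i := by
        rw [h.mul_mul_transpose α x (hWV hx), diagonal_mul_diagonal, diagonal_mul_diagonal]
        congr 1 with i
        rw [mul_comm (√(t x i)), mul_assoc, Real.mul_self_sqrt (hpos x hx i).le]
    _ = diagonal ((diagonal (t x)⁻¹ * S x)⁻¹ α) := by
        rw [Matrix.mul_inv_rev, hinv]
        congr 1 with i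
        rw [mul_diagonal]

theorem IsStackelFrameOn.exists_normalized (h : IsStackelFrameOn V K B S) (hV : IsOpen V)
    (hx₀ : x₀ ∈ V) :
    ∃ W ⊆ V, IsOpen W ∧ x₀ ∈ W ∧ ∃ B' S', IsStackelFrameOn W K B' S' ∧
      ∀ i, ∃ α, ∃ c ≠ 0, ∀ x ∈ W, S' x i α = c := by
  have hrow (i : ι) : ∃ α, S x₀ i α ≠ 0 := by
    by_contra! hzero
    exact (isUnit_iff_isUnit_det _).1 (h.isUnit_stackel x₀ hx₀) |>.ne_zero
      (det_eq_zero_of_row_eq_zero i hzero)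
  choose a ha using hrow
  let t (x : E) (i : ι) : ℝ := S x₀ i (a i) * S x i (a i)
  have ht : ContDiffOn ℝ ∞ t V := contDiffOn_pi.2 fun i =>
    contDiffOn_const.mul (contDiffOn_matrix.1 h.contDiffOn_stackel i (a i))
  have hpos : ∀ᶠ x in 𝓝 x₀, ∀ i, 0 < t x i := eventually_all.2 fun i =>
    ((contDiffOn_pi.1 ht i).continuousOn.continuousAt (hV.mem_nhds hx₀)).eventually_const_lt
      (mul_self_pos.2 (ha i))
  obtain ⟨W, hW, hWo, hxW⟩ := eventually_nhds_iff.1 ((hV.eventually_mem hx₀).and hpos)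
  have hWV : W ⊆ V := fun x hx => (hW x hx).1
  refine ⟨W, hWV, hWo, hxW, _, _, h.scale hWV (ht.mono hWV) fun x hx => (hW x hx).2,
    fun i => ⟨a i, (S x₀ i (a i))⁻¹, inv_ne_zero (ha i), fun x hx => ?_⟩⟩
  have hne : S x i (a i) ≠ 0 := right_ne_zero_of_mul ((hW x hx).2 i).ne'
  rw [diagonal_mul, Pi.inv_apply, mul_inv, mul_assoc, inv_mul_cancel₀ hne, mul_one]

end StackelFrames

section InvolutiveCombinations

variable {ι κ : Type*} [Fintype ι] [Fintype κ] {U : Set (ι → ℝ)}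
  {K : κ → (ι → ℝ) → Matrix ι ι ℝ} {x : ι → ℝ}

theorem dotProduct_fderiv_sum_smul_mulVec (hK : ∀ α, DifferentiableAt ℝ (K α) x) (a : κ → ℝ)
    (u p : ι → ℝ) :
    p ⬝ᵥ fderiv ℝ (fun y => ∑ α, a α • K α y) x u *ᵥ p =
      ∑ α, a α * (p ⬝ᵥ fderiv ℝ (K α) x u *ᵥ p) := by
  have h := HasFDerivAt.fun_sum (u := Finset.univ) fun α _ =>
    (hK α).hasFDerivAt.fun_const_smul (a α)
  refine (congrArg (fun A => p ⬝ᵥ A u *ᵥ p) h.fderiv).trans ?_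
  simp only [_root_.sum_apply, sum_mulVec, dotProduct_sum]
  refine Finset.sum_congr rfl fun α _ => ?_
  change p ⬝ᵥ (a α • fderiv ℝ (K α) x u) *ᵥ p = _
  rw [smul_mulVec, dotProduct_smul, smul_eq_mul]

theorem InvolutiveOn.sum_smul (hK : ∀ α, ∀ x ∈ U, DifferentiableAt ℝ (K α) x)
    (h : ∀ α β, InvolutiveOn U (K α) (K β)) (a b : κ → ℝ) :
    InvolutiveOn U (fun y => ∑ α, a α • K α y) (fun y => ∑ α, b α • K α y) := by
  intro x hx p
  have hexp (a b : κ → ℝ) : p ⬝ᵥ fderiv ℝ (fun y => ∑ α, a α • K α y) x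
      ((∑ β, b β • K β x) *ᵥ p) *ᵥ p =
        ∑ α, ∑ β, a α * b β * (p ⬝ᵥ fderiv ℝ (K α) x (K β x *ᵥ p) *ᵥ p) := by
    simp only [dotProduct_fderiv_sum_smul_mulVec (fun α => hK α x hx), sum_mulVec, smul_mulVec,
      map_sum, map_smul, dotProduct_sum, dotProduct_smul, smul_eq_mul, Finset.mul_sum]
    rw [Finset.sum_comm]
    exact Finset.sum_congr rfl fun α _ => Finset.sum_congr rfl fun β _ => by ring
  rw [hexp, hexp, Finset.sum_comm]
  exact Finset.sum_congr rfl fun β _ => Finset.sum_congr rfl fun α _ => by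
    rw [h α β x hx p, mul_comm (a α)]

end InvolutiveCombinations

section FrameCalculus

variable {ι E : Type*} [Fintype ι] [NormedAddCommGroup E] [NormedSpace ℝ E]
  {A B F : E → Matrix ι ι ℝ} {x : E}

theorem fderiv_dotProduct_matrix_mulVec (hA : DifferentiableAt ℝ A x) (v w : ι → ℝ) (u : E) :
    fderiv ℝ (fun y => v ⬝ᵥ A y *ᵥ w) x u = v ⬝ᵥ fderiv ℝ A x u *ᵥ w := by
  have h := (dotProductCLM ι v).hasFDerivAt.comp x
    (((mulVecCLM ι).flip w).hasFDerivAt.comp x hA.hasFDerivAt)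
  exact congrArg (· u) h.fderiv

theorem dotProduct_fderiv_mul_mul_transpose_mulVec (hB : DifferentiableAt ℝ B x)
    (hF : DifferentiableAt ℝ F x) (hFs : (F x).IsSymm) (u : E) (q : ι → ℝ) :
    q ⬝ᵥ fderiv ℝ (fun y => B y * F y * (B y)ᵀ) x u *ᵥ q =
      ((B x)ᵀ *ᵥ q) ⬝ᵥ fderiv ℝ F x u *ᵥ (B x)ᵀ *ᵥ q +
        2 * (q ⬝ᵥ fderiv ℝ B x u *ᵥ F x *ᵥ (B x)ᵀ *ᵥ q) := by
  classical
  have hBt : DifferentiableAt ℝ (fun y => (B y)ᵀ) x :=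
    (Matrix.transposeLinearEquiv ι ι ℝ ℝ).toLinearMap.toContinuousLinearMap.differentiableAt.comp
      x hB
  have hsymm : q ⬝ᵥ (B x * F x * (fderiv ℝ B x u)ᵀ) *ᵥ q =
      q ⬝ᵥ (fderiv ℝ B x u * F x * (B x)ᵀ) *ᵥ q := by
    rw [dotProduct_mulVec, ← mulVec_transpose, dotProduct_comm, transpose_mul, transpose_mul,
      transpose_transpose, hFs.eq, ← Matrix.mul_assoc]
  rw [fderiv_matrix_mul (A := fun y => B y * F y) (hB.mul hF) hBt, fderiv_matrix_mul hB hF,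
    fderiv_matrix_transpose hB, Matrix.add_mul, add_mulVec, add_mulVec, dotProduct_add,
    dotProduct_add, hsymm, dotProduct_transpose_mulVec]
  simp only [mulVec_mulVec, Matrix.mul_assoc]
  ring

theorem mul_fderiv_matrix_inv [DecidableEq ι] (hA : DifferentiableAt ℝ A x)
    (hAi : DifferentiableAt ℝ (fun y => (A y)⁻¹) x) (hu : ∀ᶠ y in 𝓝 x, IsUnit (A y)) (u : E) :
    A x * fderiv ℝ (fun y => (A y)⁻¹) x u = -(fderiv ℝ A x u * (A x)⁻¹) := by
  have hone : (fun y => A y * (A y)⁻¹) =ᶠ[𝓝 x] fun _ => 1 :=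
    hu.mono fun y hy => mul_nonsing_inv _ ((isUnit_iff_isUnit_det _).1 hy)
  have h := fderiv_matrix_mul hA hAi u
  rw [hone.fderiv_eq, fderiv_fun_const] at h
  exact eq_neg_of_add_eq_zero_right h.symm

end FrameCalculus

section StackelIdentities

variable {ι : Type*} [Fintype ι] [DecidableEq ι] {V : Set (ι → ℝ)}
  {K : ι → (ι → ℝ) → Matrix ι ι ℝ} {B S : (ι → ℝ) → Matrix ι ι ℝ} {x : ι → ℝ} {i j : ι}

theorem IsStackelFrameOn.dotProduct_sum_smul_mulVec (h : IsStackelFrameOn V K B S) (hx : x ∈ V)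
    (a q : ι → ℝ) :
    q ⬝ᵥ (B x * (∑ α, a α • K α x) * (B x)ᵀ) *ᵥ q = a ⬝ᵥ (S x)⁻¹ *ᵥ q ^ 2 := by
  simp only [Finset.mul_sum, Finset.sum_mul, Matrix.mul_smul, smul_mul, h.mul_mul_transpose _ x hx,
    sum_mulVec, dotProduct_sum, smul_mulVec, dotProduct_smul,
    dotProduct_mulVec_of_isDiag (isDiag_diagonal _), diagonal_apply_eq, smul_eq_mul]
  simp only [dotProduct, mulVec, Finset.mul_sum, Pi.pow_apply]

theorem IsStackelFrameOn.sum_smul_mulVec (h : IsStackelFrameOn V K B S) (hx : x ∈ V) (i : ι)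
    (q : ι → ℝ) :
    (∑ α, S x i α • K α x) *ᵥ (B x)ᵀ *ᵥ q = q i • (B x)⁻¹.col i := by
  have hrow : ∑ α, S x i α • (S x)⁻¹ α = Pi.single i 1 := by
    funext k
    have hdet := (isUnit_iff_isUnit_det _).1 (h.isUnit_stackel x hx)
    rw [← one_eq_pi_single, ← mul_nonsing_inv _ hdet, Finset.sum_apply]
    rfl
  have hdiag : B x * (∑ α, S x i α • K α x) * (B x)ᵀ = diagonal (Pi.single i 1) := by
    simp only [Finset.mul_sum, Finset.sum_mul, Matrix.mul_smul, smul_mul,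
      h.mul_mul_transpose _ x hx, ← diagonal_smul]
    exact (map_sum (diagonalAddMonoidHom ι ℝ) _ _).symm.trans (congrArg diagonal hrow)
  rw [mulVec_mulVec, ← nonsing_inv_mul_cancel_left (B x) (_ * (B x)ᵀ)
    ((isUnit_iff_isUnit_det _).1 (h.isUnit_coframe x hx)), ← Matrix.mul_assoc (B x), hdiag,
    ← mulVec_mulVec, ← mulVec_single_one, ← mulVec_smul]
  congr 1 with k
  rw [mulVec_diagonal]
  obtain rfl | hk := eq_or_ne k i
  · simp
  · simp [hk]

theorem IsStackelFrameOn.dotProduct_fderiv_mulVec (h : IsStackelFrameOn V K B S) (hV : IsOpen V)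
    (hK : ∀ α, ContDiffOn ℝ ∞ (K α) V) (hKs : ∀ α, ∀ x ∈ V, (K α x).IsSymm) (hx : x ∈ V) (i : ι)
    (u q : ι → ℝ) :
    ((B x)ᵀ *ᵥ q) ⬝ᵥ fderiv ℝ (fun y => ∑ α, S x i α • K α y) x u *ᵥ (B x)ᵀ *ᵥ q =
      -(((fderiv ℝ S x u * (S x)⁻¹) *ᵥ q ^ 2) i +
        2 * (q i * (q ⬝ᵥ fderiv ℝ B x u *ᵥ (B x)⁻¹.col i))) := by
  have hSi := contDiffOn_matrix_inv h.contDiffOn_stackel h.isUnit_stackel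
  have hB := differentiableAt_of_contDiffOn h.contDiffOn_coframe hV hx
  have hFV : ContDiffOn ℝ ∞ (fun y => ∑ α, S x i α • K α y) V :=
    .sum fun α _ => (hK α).const_smul (R := ℝ) (S x i α)
  have hBF : ContDiffOn ℝ ∞ (fun y => B y * (∑ α, S x i α • K α y) * (B y)ᵀ) V :=
    (h.contDiffOn_coframe.mul hFV).mul (contDiffOn_matrix_transpose h.contDiffOn_coframe)
  have hF := differentiableAt_of_contDiffOn hFV hV hx
  have hFs : (∑ α, S x i α • K α x).IsSymm := by
    simp only [Matrix.IsSymm, transpose_sum, transpose_smul, (hKs _ x hx).eq]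
  have hleft := dotProduct_fderiv_mul_mul_transpose_mulVec hB hF hFs u q
  have heq : (fun y => q ⬝ᵥ (B y * (∑ α, S x i α • K α y) * (B y)ᵀ) *ᵥ q) =ᶠ[𝓝 x]
      fun y => S x i ⬝ᵥ (S y)⁻¹ *ᵥ q ^ 2 :=
    (hV.eventually_mem hx).mono fun y hy => h.dotProduct_sum_smul_mulVec hy (S x i) q
  have hright := DFunLike.congr_fun (heq.fderiv_eq (𝕜 := ℝ)) u
  rw [fderiv_dotProduct_matrix_mulVec (differentiableAt_of_contDiffOn hBF hV hx), hleft,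
    fderiv_dotProduct_matrix_mulVec (differentiableAt_of_contDiffOn hSi hV hx)] at hright
  have hS : S x i ⬝ᵥ fderiv ℝ (fun y => (S y)⁻¹) x u *ᵥ q ^ 2 =
      -((fderiv ℝ S x u * (S x)⁻¹) *ᵥ q ^ 2) i := by
    rw [← Pi.neg_apply, ← neg_mulVec, ← mul_fderiv_matrix_inv
      (differentiableAt_of_contDiffOn h.contDiffOn_stackel hV hx)
      (differentiableAt_of_contDiffOn hSi hV hx)
      ((hV.eventually_mem hx).mono h.isUnit_stackel), ← mulVec_mulVec]
    rfl
  rw [hS, h.sum_smul_mulVec hx, mulVec_smul, dotProduct_smul, smul_eq_mul] at hright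
  linarith

theorem IsStackelFrameOn.bracket_identity (h : IsStackelFrameOn V K B S) (hV : IsOpen V)
    (hK : ∀ α, ContDiffOn ℝ ∞ (K α) V) (hKs : ∀ α, ∀ x ∈ V, (K α x).IsSymm)
    (hinv : ∀ α β, InvolutiveOn V (K α) (K β)) (hx : x ∈ V) (i j : ι) (q : ι → ℝ) :
    q j * (((fderiv ℝ S x ((B x)⁻¹.col j) * (S x)⁻¹) *ᵥ q ^ 2) i +
        2 * (q i * (q ⬝ᵥ fderiv ℝ B x ((B x)⁻¹.col j) *ᵥ (B x)⁻¹.col i))) =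
      q i * (((fderiv ℝ S x ((B x)⁻¹.col i) * (S x)⁻¹) *ᵥ q ^ 2) j +
        2 * (q j * (q ⬝ᵥ fderiv ℝ B x ((B x)⁻¹.col i) *ᵥ (B x)⁻¹.col j))) := by
  have hbr := InvolutiveOn.sum_smul
    (fun α _ hy => differentiableAt_of_contDiffOn (hK α) hV hy) hinv (S x i) (S x j) x hx
    ((B x)ᵀ *ᵥ q)
  simp only [h.sum_smul_mulVec hx, map_smul, smul_mulVec, dotProduct_smul, smul_eq_mul,
    h.dotProduct_fderiv_mulVec hV hK hKs hx, mul_neg] at hbr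
  exact neg_injective hbr

theorem IsStackelFrameOn.fderiv_stackel_col (h : IsStackelFrameOn V K B S) (hV : IsOpen V)
    (hK : ∀ α, ContDiffOn ℝ ∞ (K α) V) (hKs : ∀ α, ∀ x ∈ V, (K α x).IsSymm)
    (hinv : ∀ α β, InvolutiveOn V (K α) (K β))
    (hnorm : ∀ i, ∃ α, ∃ c ≠ 0, ∀ x ∈ V, S x i α = c) (hx : x ∈ V) (hij : i ≠ j) :
    fderiv ℝ S x ((B x)⁻¹.col j) i = 0 := by
  let M := fderiv ℝ S x ((B x)⁻¹.col j) * (S x)⁻¹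
  have hoff {k : ι} (hk : k ≠ i) : M i k = 0 :=
    eq_zero_of_forall_mul_dotProduct_sq hij (fun q hq => by
      have hbr := h.bracket_identity hV hK hKs hinv hx i j q
      rw [hq, zero_mul, zero_mul, mul_zero, add_zero] at hbr
      exact hbr) hk
  have hrow : fderiv ℝ S x ((B x)⁻¹.col j) i = M i i • S x i := by
    rw [← nonsing_inv_mul_cancel_right (S x) (fderiv ℝ S x _)
      ((isUnit_iff_isUnit_det _).1 (h.isUnit_stackel x hx))]
    ext k
    exact Finset.sum_eq_single i (fun l _ hl => mul_eq_zero_of_left (hoff hl) _) (by simp)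
  obtain ⟨α, c, hc, hcS⟩ := hnorm i
  have hzero : fderiv ℝ S x ((B x)⁻¹.col j) i α = 0 := by
    have hconst : (fun y => S y i α) =ᶠ[𝓝 x] fun _ => c := (hV.eventually_mem hx).mono hcS
    rw [← fderiv_matrix_apply (differentiableAt_of_contDiffOn h.contDiffOn_stackel hV hx),
      hconst.fderiv_eq, fderiv_fun_const]
    rfl
  rw [hrow, Pi.smul_apply, smul_eq_mul, hcS x hx] at hzero
  rw [hrow, (mul_eq_zero.1 hzero).resolve_right hc, zero_smul]

theorem IsStackelFrameOn.fderiv_coframe_mulVec_comm (h : IsStackelFrameOn V K B S) (hV : IsOpen V)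
    (hK : ∀ α, ContDiffOn ℝ ∞ (K α) V) (hKs : ∀ α, ∀ x ∈ V, (K α x).IsSymm)
    (hinv : ∀ α β, InvolutiveOn V (K α) (K β))
    (hnorm : ∀ i, ∃ α, ∃ c ≠ 0, ∀ x ∈ V, S x i α = c) (hx : x ∈ V) (u w : ι → ℝ) :
    fderiv ℝ B x u *ᵥ w = fderiv ℝ B x w *ᵥ u := by
  have hcol (i j : ι) : fderiv ℝ B x ((B x)⁻¹.col j) *ᵥ (B x)⁻¹.col i =
      fderiv ℝ B x ((B x)⁻¹.col i) *ᵥ (B x)⁻¹.col j := by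
    obtain rfl | hij := eq_or_ne i j
    · rfl
    have hS {i j : ι} (hij : i ≠ j) (q : ι → ℝ) :
        ((fderiv ℝ S x ((B x)⁻¹.col j) * (S x)⁻¹) *ᵥ q) i = 0 := by
      rw [← mulVec_mulVec, mulVec, h.fderiv_stackel_col hV hK hKs hinv hnorm hx hij,
        zero_dotProduct]
    refine sub_eq_zero.1 (eq_zero_of_forall_mul_dotProduct (i := i) (j := j) fun q => ?_)
    have hbr := h.bracket_identity hV hK hKs hinv hx i j q
    rw [hS hij, hS hij.symm] at hbr
    rw [dotProduct_sub]
    linarith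
  let f : (ι → ℝ) →ₗ[ℝ] (ι → ℝ) →ₗ[ℝ] (ι → ℝ) := (mulVecBilin ℝ ℝ).compl₁₂
    ((fderiv ℝ B x).toLinearMap ∘ₗ (B x)⁻¹.mulVecLin) (B x)⁻¹.mulVecLin
  have hf : f = f.flip := LinearMap.ext_basis (Pi.basisFun ℝ ι) (Pi.basisFun ℝ ι) fun i j => by
    simpa [f] using hcol j i
  have hB (w : ι → ℝ) : (B x)⁻¹ *ᵥ B x *ᵥ w = w := by
    rw [mulVec_mulVec, nonsing_inv_mul _ ((isUnit_iff_isUnit_det _).1 (h.isUnit_coframe x hx)),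
      one_mulVec]
  simpa [f, hB] using congrArg (fun g => g (B x *ᵥ u) (B x *ᵥ w)) hf

end StackelIdentities

section Charts

variable {E F : Type*} [NormedAddCommGroup E] [NormedSpace ℝ E] [NormedAddCommGroup F]
  [NormedSpace ℝ F] {s : Set E} {η : E → E →L[ℝ] F} {x₀ : E}

theorem exists_contDiffOn_hasFDerivAt_of_fderiv_symmetric [CompleteSpace F] (hs : Convex ℝ s)
    (hso : IsOpen s) (hη : ContDiffOn ℝ ∞ η s)
    (hsymm : ∀ x ∈ s, ∀ u w, fderiv ℝ η x u w = fderiv ℝ η x w u) :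
    ∃ f : E → F, ContDiffOn ℝ ∞ f s ∧ ∀ x ∈ s, HasFDerivAt f (η x) x := by
  obtain ⟨f, hf⟩ := hs.exists_forall_hasFDerivAt_of_fderiv_symmetric hso
    (hη.differentiableOn (by simp)) hsymm
  refine ⟨f, (contDiffOn_infty_iff_fderiv_of_isOpen hso).2 ⟨fun x hx => ?_, ?_⟩, hf⟩
  · exact (hf x hx).differentiableAt.differentiableWithinAt
  · exact hη.congr fun x hx => (hf x hx).fderiv

theorem exists_openPartialHomeomorph_hasFDerivAt [CompleteSpace E] [CompleteSpace F]
    (hs : IsOpen s) (hη : ContDiffOn ℝ ∞ η s)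
    (hsymm : ∀ x ∈ s, ∀ u w, fderiv ℝ η x u w = fderiv ℝ η x w u) (hx₀ : x₀ ∈ s)
    (hinv : (η x₀).IsInvertible) :
    ∃ e : OpenPartialHomeomorph E F, x₀ ∈ e.source ∧ e.source ⊆ s ∧ Convex ℝ e.target ∧
      ContDiffOn ℝ ∞ e e.source ∧ ContDiffOn ℝ ∞ e.symm e.target ∧
      ∀ x ∈ e.source, HasFDerivAt e (η x) x := by
  obtain ⟨r, hr, hrs⟩ := Metric.isOpen_iff.1 hs x₀ hx₀
  obtain ⟨f, hf, hf'⟩ := exists_contDiffOn_hasFDerivAt_of_fderiv_symmetric (convex_ball x₀ r)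
    Metric.isOpen_ball (hη.mono hrs) fun x hx => hsymm x (hrs hx)
  have hxr := Metric.mem_ball_self (x := x₀) hr
  obtain ⟨e, hxe, her, rfl, hesymm⟩ := exists_openPartialHomeomorph_contDiffOn_symm
    Metric.isOpen_ball hf hxr ((hf' x₀ hxr).fderiv.symm ▸ hinv)
  obtain ⟨ρ, hρ, hρe⟩ := Metric.isOpen_iff.1 e.open_target _ (e.map_source hxe)
  let e' := (e.symm.restrOpen (Metric.ball (e x₀) ρ) Metric.isOpen_ball).symm
  have hsource : e'.source ⊆ e.source := Set.inter_subset_left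
  have htarget : e'.target = Metric.ball (e x₀) ρ := Set.inter_eq_right.2 hρe
  refine ⟨e', ⟨hxe, Metric.mem_ball_self hρ⟩, hsource.trans (her.trans hrs),
    htarget ▸ convex_ball _ _, hf.mono (hsource.trans her), hesymm.mono (htarget ▸ hρe),
    fun x hx => hf' x (her (hsource hx))⟩

end Charts

section StackelCoordinates

variable {ι : Type*} [Fintype ι] [DecidableEq ι] {V : Set (ι → ℝ)}
  {K : ι → (ι → ℝ) → Matrix ι ι ℝ} {B S : (ι → ℝ) → Matrix ι ι ℝ} {x₀ : ι → ℝ}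
  {e : OpenPartialHomeomorph (ι → ℝ) (ι → ℝ)}

theorem fderiv_symm_apply_eq_inv_mulVec {y : ι → ℝ} (hy : y ∈ e.target)
    (hB : IsUnit (B (e.symm y))) (he : HasFDerivAt e (mulVecCLM ι (B (e.symm y))) (e.symm y))
    (hsymm : DifferentiableAt ℝ e.symm y) (v : ι → ℝ) :
    fderiv ℝ e.symm y v = (B (e.symm y))⁻¹ *ᵥ v := by
  have hid : e ∘ e.symm =ᶠ[𝓝 y] id := e.eventually_right_inverse hy
  have h : B (e.symm y) *ᵥ fderiv ℝ e.symm y v = v :=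
    DFunLike.congr_fun ((he.comp y hsymm.hasFDerivAt).unique
      ((hasFDerivAt_id y).congr_of_eventuallyEq hid)) v
  rw [← h, mulVec_mulVec, nonsing_inv_mul _ ((isUnit_iff_isUnit_det _).1 hB), one_mulVec, h]

theorem eq_of_apply_eq_of_fderiv_col_eq_zero {g : (ι → ℝ) → ℝ} {i : ι}
    (hconv : Convex ℝ e.target) (hsymm : ContDiffOn ℝ ∞ e.symm e.target)
    (he : ∀ x ∈ e.source, HasFDerivAt e (mulVecCLM ι (B x)) x)
    (hB : ∀ x ∈ e.source, IsUnit (B x)) (hg : ∀ x ∈ e.source, DifferentiableAt ℝ g x)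
    (hcol : ∀ x ∈ e.source, ∀ j ≠ i, fderiv ℝ g x ((B x)⁻¹.col j) = 0) {y y' : ι → ℝ}
    (hy : y ∈ e.target) (hy' : y' ∈ e.target) (hi : y i = y' i) :
    g (e.symm y) = g (e.symm y') := by
  have hder {z : ι → ℝ} (hz : z ∈ e.target) : DifferentiableAt ℝ e.symm z :=
    differentiableAt_of_contDiffOn hsymm e.open_target hz
  obtain ⟨z, hz, hmvt⟩ := domain_mvt (fun z hz =>
    ((hg _ (e.map_target hz)).hasFDerivAt.comp z (hder hz).hasFDerivAt).hasFDerivWithinAt)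
    hconv hy hy'
  have hzt := hconv.segment_subset hy hy' hz
  have hzs := e.map_target hzt
  have hzero : fderiv ℝ g (e.symm z) (fderiv ℝ e.symm z (y' - y)) = 0 := by
    rw [fderiv_symm_apply_eq_inv_mulVec hzt (hB _ hzs) (he _ hzs) (hder hzt)]
    refine (sum_smul_map_single ((fderiv ℝ g (e.symm z)).comp (mulVecCLM ι (B (e.symm z))⁻¹))
      (y' - y)).symm.trans (Finset.sum_eq_zero fun j _ => ?_)
    change (y' - y) j • fderiv ℝ g (e.symm z) ((B (e.symm z))⁻¹ *ᵥ Pi.single j 1) = 0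
    rw [mulVec_single_one]
    obtain rfl | hj := eq_or_ne j i
    · rw [Pi.sub_apply, hi, sub_self, zero_smul]
    · rw [hcol _ hzs j hj, smul_zero]
  exact (sub_eq_zero.1 (hmvt.trans hzero)).symm

theorem IsStackelFrameOn.exists_chart (h : IsStackelFrameOn V K B S) (hV : IsOpen V)
    (hK : ∀ α, ContDiffOn ℝ ∞ (K α) V) (hKs : ∀ α, ∀ x ∈ V, (K α x).IsSymm)
    (hinv : ∀ α β, InvolutiveOn V (K α) (K β))
    (hnorm : ∀ i, ∃ α, ∃ c ≠ 0, ∀ x ∈ V, S x i α = c) (hx₀ : x₀ ∈ V) :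
    ∃ e : OpenPartialHomeomorph (ι → ℝ) (ι → ℝ), x₀ ∈ e.source ∧ e.source ⊆ V ∧
      ContDiffOn ℝ ∞ e e.source ∧ ContDiffOn ℝ ∞ e.symm e.target ∧
      (∀ x ∈ e.source, HasFDerivAt e (mulVecCLM ι (B x)) x) ∧
      ∀ i j, ∀ y ∈ e.target, ∀ y' ∈ e.target, y i = y' i →
        S (e.symm y) i j = S (e.symm y') i j := by
  have hB {x} (hx : x ∈ V) := differentiableAt_of_contDiffOn h.contDiffOn_coframe hV hx
  have hS {x} (hx : x ∈ V) := differentiableAt_of_contDiffOn h.contDiffOn_stackel hV hx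
  have hη {x} (hx : x ∈ V) (u w : ι → ℝ) :
      fderiv ℝ (fun x => mulVecCLM ι (B x)) x u w = fderiv ℝ B x u *ᵥ w :=
    congrArg (· u w) ((mulVecCLM ι).hasFDerivAt.comp x (hB hx).hasFDerivAt).fderiv
  obtain ⟨e, hxe, heV, hconv, he, hesymm, he'⟩ := exists_openPartialHomeomorph_hasFDerivAt hV
    ((mulVecCLM ι).contDiff.comp_contDiffOn h.contDiffOn_coframe)
    (fun x hx u w => (hη hx u w).trans
      ((h.fderiv_coframe_mulVec_comm hV hK hKs hinv hnorm hx u w).trans (hη hx w u).symm)) hx₀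
    (isInvertible_of_injective (mulVec_injective_of_isUnit (h.isUnit_coframe x₀ hx₀)))
  refine ⟨e, hxe, heV, he, hesymm, he', fun i j y hy y' hy' hi => ?_⟩
  refine eq_of_apply_eq_of_fderiv_col_eq_zero (g := fun x => S x i j) hconv hesymm he'
    (fun x hx => h.isUnit_coframe x (heV hx)) (fun x hx => ?_) (fun x hx k hk => ?_) hy hy' hi
  · exact (Matrix.entryLinearMap ℝ ℝ i j).toContinuousLinearMap.differentiableAt.comp x
      (hS (heV hx))
  · rw [fderiv_matrix_apply (hS (heV hx)),
      h.fderiv_stackel_col hV hK hKs hinv hnorm (heV hx) hk.symm, Pi.zero_apply]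

end StackelCoordinates

section GeodesicIntegrals

variable {ι κ : Type*} [Fintype ι] {U : Set (ι → ℝ)}

theorem sum_mul_mul_eq_dotProduct_mulVec (A : Matrix ι ι ℝ) (p : ι → ℝ) :
    ∑ i, ∑ j, A i j * p i * p j = p ⬝ᵥ A *ᵥ p := by
  simp only [dotProduct, mulVec, Finset.mul_sum]
  exact Finset.sum_congr rfl fun i _ => Finset.sum_congr rfl fun j _ => by ring

theorem linearIndependent_domRestrict_of_fderiv [Finite κ] {K : κ → (ι → ℝ) → Matrix ι ι ℝ}
    (hU : IsOpen U)
    (hK : ∀ α, ∀ x ∈ U, DifferentiableAt ℝ (K α) x) (hKs : ∀ α, ∀ x ∈ U, (K α x).IsSymm)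
    {z : (ι → ℝ) × (ι → ℝ)} (hz : z.1 ∈ U)
    (hind : LinearIndependent ℝ fun α =>
      fderiv ℝ (fun z : (ι → ℝ) × (ι → ℝ) => z.2 ⬝ᵥ K α z.1 *ᵥ z.2) z) :
    LinearIndependent ℝ fun α => U.domRestrict (K α) := by
  cases nonempty_fintype κ
  refine Fintype.linearIndependent_iff.2 fun a ha => Fintype.linearIndependent_iff.1 hind a ?_
  have hzero {x : ι → ℝ} (hx : x ∈ U) : ∑ α, a α • K α x = 0 :=
    (Finset.sum_apply _ _ _).symm.trans (congrFun ha ⟨x, hx⟩)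
  have hev : (fun x => ∑ α, a α • K α x) =ᶠ[𝓝 z.1] fun _ => 0 :=
    (hU.eventually_mem hz).mono fun x hx => hzero hx
  refine ContinuousLinearMap.ext fun v => ?_
  have hsum : ∑ α, a α * (z.2 ⬝ᵥ fderiv ℝ (K α) z.1 v.1 *ᵥ z.2 + 2 * (v.2 ⬝ᵥ K α z.1 *ᵥ z.2)) =
      z.2 ⬝ᵥ fderiv ℝ (fun x => ∑ α, a α • K α x) z.1 v.1 *ᵥ z.2 +
        2 * (v.2 ⬝ᵥ (∑ α, a α • K α z.1) *ᵥ z.2) := by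
    rw [dotProduct_fderiv_sum_smul_mulVec fun α => hK α z.1 hz, sum_mulVec, dotProduct_sum,
      Finset.mul_sum, ← Finset.sum_add_distrib]
    exact Finset.sum_congr rfl fun α _ => by
      rw [smul_mulVec, dotProduct_smul, smul_eq_mul]; ring
  rw [hzero hz, hev.fderiv_eq, fderiv_const_apply, _root_.zero_apply, zero_mulVec, dotProduct_zero,
    dotProduct_zero, mul_zero, add_zero] at hsum
  simp only [_root_.sum_apply, _root_.smul_apply, smul_eq_mul]
  exact (Finset.sum_congr rfl fun α _ => congrArg (a α * ·)
    (fderiv_quadraticForm (hK α z.1 hz) (hKs α z.1 hz) z.2 v.1 v.2)).trans hsum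

theorem involutiveOn_of_poisson_eq_zero {n : ℕ} {U : Set (Fin n → ℝ)}
    {A B : (Fin n → ℝ) → Matrix (Fin n) (Fin n) ℝ} (hA : ∀ x ∈ U, DifferentiableAt ℝ A x)
    (hB : ∀ x ∈ U, DifferentiableAt ℝ B x) (hAs : ∀ x ∈ U, (A x).IsSymm)
    (hBs : ∀ x ∈ U, (B x).IsSymm)
    (h : ∀ z : (Fin n → ℝ) × (Fin n → ℝ), z.1 ∈ U →
      poisson (fun z => z.2 ⬝ᵥ A z.1 *ᵥ z.2) (fun z => z.2 ⬝ᵥ B z.1 *ᵥ z.2) z = 0) :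
    InvolutiveOn U A B := by
  intro x hx p
  have hbr := h (x, p) hx
  rw [poisson_quadraticForm (hA x hx) (hB x hx) (hAs x hx) (hBs x hx)] at hbr
  linarith

end GeodesicIntegrals

section StackelCharts

variable {n : ℕ} {U V : Set (Fin n → ℝ)} {K : Fin n → (Fin n → ℝ) → Matrix (Fin n) (Fin n) ℝ}
  {B S : (Fin n → ℝ) → Matrix (Fin n) (Fin n) ℝ} {x₀ : Fin n → ℝ} {o : Fin n}

/-- A smooth chart `e` of `U` in which the quadratic forms `K α` come from the Stäckel matrix `S`,
a function of the coordinates. -/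
structure IsStackelChart (U : Set (Fin n → ℝ)) (K : Fin n → (Fin n → ℝ) → Matrix (Fin n) (Fin n) ℝ)
    (e : OpenPartialHomeomorph (Fin n → ℝ) (Fin n → ℝ))
    (S : (Fin n → ℝ) → Matrix (Fin n) (Fin n) ℝ) : Prop where
  source_subset : e.source ⊆ U
  contDiffOn : ContDiffOn ℝ ∞ e e.source
  contDiffOn_symm : ContDiffOn ℝ ∞ e.symm e.target
  contDiffOn_stackel : ∀ i j, ContDiffOn ℝ ∞ (fun y => S y i j) e.target
  isUnit_stackel : ∀ y ∈ e.target, IsUnit (S y)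
  stackel_apply_eq : ∀ i j, ∀ y ∈ e.target, ∀ y' ∈ e.target, y i = y' i → S y i j = S y' i j
  quadraticForm_eq : ∀ α, ∀ y ∈ e.target, ∀ q : Fin n → ℝ,
    ((jacobian e (e.symm y))ᵀ *ᵥ q) ⬝ᵥ K α (e.symm y) *ᵥ (jacobian e (e.symm y))ᵀ *ᵥ q =
      ∑ i, (S y)⁻¹ α i * q i ^ 2

theorem jacobian_eq_of_hasFDerivAt {φ : (Fin n → ℝ) → Fin n → ℝ} {M : Matrix (Fin n) (Fin n) ℝ}
    (h : HasFDerivAt φ (mulVecCLM (Fin n) M) x₀) : jacobian φ x₀ = M := by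
  ext i j
  have hi := DFunLike.congr_fun (hasFDerivAt_pi'.1 h i).fderiv (Pi.single j 1)
  exact hi.trans (congrFun (mulVec_single_one M j) i)

theorem IsStackelFrameOn.exists_isStackelChart (h : IsStackelFrameOn V K B S) (hV : IsOpen V)
    (hVU : V ⊆ U) (hK : ∀ α, ContDiffOn ℝ ∞ (K α) U) (hKs : ∀ α, ∀ x ∈ U, (K α x).IsSymm)
    (hinv : ∀ α β, InvolutiveOn U (K α) (K β)) (hx₀ : x₀ ∈ V) :
    ∃ e S', x₀ ∈ e.source ∧ IsStackelChart U K e S' := by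
  obtain ⟨W, hWV, hW, hxW, B', S', hS', hnorm⟩ := h.exists_normalized hV hx₀
  have hWU := hWV.trans hVU
  obtain ⟨e, hxe, heW, he, hesymm, he', hrow⟩ := hS'.exists_chart hW (fun α => (hK α).mono hWU)
    (fun α x hx => hKs α x (hWU hx)) (fun α β x hx => hinv α β x (hWU hx)) hnorm hxW
  have hmaps : Set.MapsTo e.symm e.target W := fun y hy => heW (e.map_target hy)
  refine ⟨e, S' ∘ e.symm, hxe, heW.trans hWU, he, hesymm,
    contDiffOn_matrix.1 (hS'.contDiffOn_stackel.comp hesymm hmaps),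
    fun y hy => hS'.isUnit_stackel _ (hmaps hy), hrow,
    fun α y hy q => ?_⟩
  rw [jacobian_eq_of_hasFDerivAt (he' _ (e.map_target hy)), dotProduct_transpose_mulVec,
    hS'.mul_mul_transpose α _ (hmaps hy), dotProduct_mulVec_of_isDiag (isDiag_diagonal _)]
  simp only [diagonal_apply_eq, Function.comp_apply]

theorem ae_exists_isStackelChart (hU : IsOpen U) (hUc : IsPreconnected U)
    (hK : ∀ α i j, ContDiffOn ℝ ∞ (fun x => K α x i j) U) (hKs : ∀ α, ∀ x ∈ U, (K α x).IsSymm)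
    (hG : ∀ x ∈ U, IsUnit (K o x))
    (hinv : ∀ α β, ∀ z : (Fin n → ℝ) × (Fin n → ℝ), z.1 ∈ U →
      poisson (fun z => z.2 ⬝ᵥ K α z.1 *ᵥ z.2) (fun z => z.2 ⬝ᵥ K β z.1 *ᵥ z.2) z = 0)
    (hdiag : ∀ᵐ x, x ∈ U → ∃ B : Matrix (Fin n) (Fin n) ℝ, IsUnit B ∧
      ∀ α, (B * K α x * Bᵀ).IsDiag)
    {z : (Fin n → ℝ) × (Fin n → ℝ)} (hz : z.1 ∈ U)
    (hind : LinearIndependent ℝ fun α =>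
      fderiv ℝ (fun z : (Fin n → ℝ) × (Fin n → ℝ) => z.2 ⬝ᵥ K α z.1 *ᵥ z.2) z) :
    ∀ᵐ x, x ∈ U → ∃ e S, x ∈ e.source ∧ IsStackelChart U K e S := by
  have hK (α : Fin n) : ContDiffOn ℝ ∞ (K α) U := contDiffOn_matrix.2 (hK α)
  have hKd (α : Fin n) (x) (hx : x ∈ U) := differentiableAt_of_contDiffOn (hK α) hU hx
  have hinv (α β : Fin n) : InvolutiveOn U (K α) (K β) :=
    involutiveOn_of_poisson_eq_zero (hKd α) (hKd β) (hKs α) (hKs β) (hinv α β)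
  filter_upwards [hdiag, ae_linearIndependent volume hU hUc (hK o) (hKs o) hG
    (fun α => ⟨hK α, hKs α, hinv o α⟩) hdiag
    (linearIndependent_domRestrict_of_fderiv hU hKd hKs hz hind)] with x hx hxind hxU
  obtain ⟨V, hVU, hV, hxV, B, S, h⟩ := exists_isStackelFrameOn hU hK hKs hG
    (fun α β _ => commute_inv_mul_of_ae_isDiag hU hK hG hdiag α β) hxU (hxind hxU) (hx hxU)
  exact h.exists_isStackelChart hV hVU hK hKs hinv hxV

end StackelCharts

end Stackel

/-- under assumptions (1), (2), (3) on the quadratic integrals of the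
geodesic flow (with `G = K ⟨0,hn⟩`), if moreover the integrals are pairwise in
involution, then near almost every point they come from the Stäckel construction:
there are local coordinates `y = φ(x)` and a Stäckel matrix `S` on the target such that
`I_α(φ⁻¹(y), Dφ(φ⁻¹(y))ᵀ q) = ∑ i, (S(y)⁻¹)_{α i} q_i²`. -/
theorem stmt2 (n : ℕ) (hn : 1 ≤ n)
    (U : Set (Fin n → ℝ)) (hUopen : IsOpen U) (hUconn : IsConnected U)
    (K : Fin n → (Fin n → ℝ) → Matrix (Fin n) (Fin n) ℝ)
    (hKsmooth : ∀ α i j, ContDiffOn ℝ (⊤ : ℕ∞) (fun x => K α x i j) U)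
    (hKsymm : ∀ α, ∀ x ∈ U, (K α x).IsSymm)
    (hGinv : ∀ x ∈ U, IsUnit (K ⟨0, hn⟩ x))
    (I : Fin n → (Fin n → ℝ) × (Fin n → ℝ) → ℝ)
    (hI : ∀ α, I α = fun z => ∑ i : Fin n, ∑ j : Fin n, K α z.1 i j * z.2 i * z.2 j)
    (H : (Fin n → ℝ) × (Fin n → ℝ) → ℝ)
    (hH : H = fun z => (1 / 2 : ℝ) * I ⟨0, hn⟩ z)
    -- (1) each `I α` is an integral of the geodesic flow
    (h1 : ∀ α, ∀ z : (Fin n → ℝ) × (Fin n → ℝ), z.1 ∈ U → poisson H (I α) z = 0)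
    -- (2) simultaneous diagonalisability at almost every point
    (h2 : ∀ᵐ x ∂(volume : Measure (Fin n → ℝ)), x ∈ U →
      ∃ B : Matrix (Fin n) (Fin n) ℝ, IsUnit B ∧ ∀ α, (B * K α x * Bᵀ).IsDiag)
    -- (3) the differentials of the integrals are linearly independent at some point
    (h3 : ∃ z : (Fin n → ℝ) × (Fin n → ℝ), z.1 ∈ U ∧
      LinearIndependent ℝ (fun α => fderiv ℝ (I α) z))
    -- the integrals are pairwise in involution
    (hinvol : ∀ α β, ∀ z : (Fin n → ℝ) × (Fin n → ℝ), z.1 ∈ U →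
      poisson (I α) (I β) z = 0) :
    ∀ᵐ x₀ ∂(volume : Measure (Fin n → ℝ)), x₀ ∈ U →
      ∃ (V W : Set (Fin n → ℝ)) (φ ψ : (Fin n → ℝ) → (Fin n → ℝ))
        (S : (Fin n → ℝ) → Matrix (Fin n) (Fin n) ℝ),
        IsOpen V ∧ V ⊆ U ∧ x₀ ∈ V ∧ IsOpen W ∧
        -- φ : V → W is a smooth diffeomorphism with smooth inverse ψ
        ContDiffOn ℝ (⊤ : ℕ∞) φ V ∧ ContDiffOn ℝ (⊤ : ℕ∞) ψ W ∧
        φ '' V = W ∧ (∀ x ∈ V, ψ (φ x) = x) ∧ (∀ y ∈ W, φ (ψ y) = y) ∧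
        -- S is a smooth invertible-valued matrix function on W
        (∀ i j, ContDiffOn ℝ (⊤ : ℕ∞) (fun y => S y i j) W) ∧
        (∀ y ∈ W, IsUnit (S y)) ∧
        -- the i-th row of S depends only on the i-th coordinate
        (∀ i j, ∀ y ∈ W, ∀ y' ∈ W, y i = y' i → S y i j = S y' i j) ∧
        -- the integrals come from the Stäckel construction in coordinates y = φ(x)
        (∀ α, ∀ y ∈ W, ∀ q : Fin n → ℝ,
          I α (ψ y, (jacobian φ (ψ y))ᵀ.mulVec q)
            = ∑ i : Fin n, (S y)⁻¹ α i * (q i) ^ 2) := by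
  have hIq (α : Fin n) : I α = fun z => z.2 ⬝ᵥ K α z.1 *ᵥ z.2 :=
    (hI α).trans (funext fun z => Stackel.sum_mul_mul_eq_dotProduct_mulVec _ _)
  obtain ⟨z, hz, hind⟩ := h3
  simp only [hIq] at hinvol hind
  filter_upwards [Stackel.ae_exists_isStackelChart hUopen hUconn.isPreconnected hKsmooth hKsymm
    hGinv hinvol h2 hz hind] with x hx hxU
  obtain ⟨e, S, hxe, he⟩ := hx hxU
  refine ⟨e.source, e.target, e, e.symm, S, e.open_source, he.source_subset, hxe, e.open_target,
    he.contDiffOn, he.contDiffOn_symm, e.image_source_eq_target, fun _ => e.left_inv,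
    fun _ => e.right_inv, he.contDiffOn_stackel, he.isUnit_stackel, he.stackel_apply_eq,
    fun α y hy q => ?_⟩
  rw [hIq]
  exact he.quadraticForm_eq α y hy q
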